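/- arXiv:1106.6214 — 2 statements merged into one kernel-verified Lean document; each statement's English description precedes it below -/
import Mathlib

section
/- For every d ≥ 0 and all real angles α, β, there exists a bounded-curvature path from configuration (0,0,α) to (d,0,β) of length at most d + 7π/3. -/
open Real

/-- A bounded-curvature path of length `T ≥ 0` from configuration `(x₀, y₀, α)`
to configuration `(x₁, y₁, β)`: a map `γ : ℝ → ℝ²` (Euclidean plane) that is
continuously differentiable on `[0, T]` with unit-speed derivative `γ'`, whose
derivative is `1`-Lipschitz on `[0, T]` (curvature bound `≤ 1`), starting at
`(x₀, y₀)` with direction `(cos α, sin α)` and ending at `(x₁, y₁)` with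
direction `(cos β, sin β)`. -/
def IsBCPath (T x₀ y₀ α x₁ y₁ β : ℝ) (γ : ℝ → EuclideanSpace ℝ (Fin 2)) : Prop :=
  0 ≤ T ∧
  ∃ γ' : ℝ → EuclideanSpace ℝ (Fin 2),
    (∀ t ∈ Set.Icc (0:ℝ) T, HasDerivWithinAt γ (γ' t) (Set.Icc 0 T) t) ∧
    ContinuousOn γ' (Set.Icc 0 T) ∧
    (∀ t ∈ Set.Icc (0:ℝ) T, ‖γ' t‖ = 1) ∧
    LipschitzOnWith 1 γ' (Set.Icc 0 T) ∧
    γ 0 = ![x₀, y₀] ∧ γ' 0 = ![Real.cos α, Real.sin α] ∧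
    γ T = ![x₁, y₁] ∧ γ' T = ![Real.cos β, Real.sin β]


/-- Displacement `(x,y)` reachable in length `T` with headings from `a` to `b`. -/
def Reach (T x y a b : ℝ) : Prop :=
  0 ≤ T ∧ ∃ θ : ℝ → ℝ, LipschitzWith 1 θ ∧ cos (θ 0) = cos a ∧ sin (θ 0) = sin a ∧
    cos (θ T) = cos b ∧ sin (θ T) = sin b ∧
    (∫ t in (0:ℝ)..T, cos (θ t)) = x ∧ (∫ t in (0:ℝ)..T, sin (θ t)) = y

theorem Reach.straight (T a : ℝ) (hT : 0 ≤ T) : Reach T (T * cos a) (T * sin a) a a := by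
  refine ⟨hT, fun _ => a, LipschitzWith.const' a, rfl, rfl, rfl, rfl, ?_, ?_⟩ <;> simp

theorem Reach.left (a b : ℝ) (h : a ≤ b) :
    Reach (b - a) (sin b - sin a) (cos a - cos b) a b := by
  refine ⟨by linarith, fun t => t + a, ?_, by simp, by simp, by simp, by simp, ?_, ?_⟩
  · refine LipschitzWith.of_dist_le_mul fun s t => ?_
    simp
  · rw [intervalIntegral.integral_comp_add_right (fun t => cos t)]; simp
  · rw [intervalIntegral.integral_comp_add_right (fun t => sin t)]; simp

theorem Reach.right (a b : ℝ) (h : b ≤ a) :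
    Reach (a - b) (sin a - sin b) (cos b - cos a) a b := by
  refine ⟨by linarith, fun t => a - t, ?_, by simp, by simp, by simp, by simp, ?_, ?_⟩
  · refine LipschitzWith.of_dist_le_mul fun s t => ?_
    simp only [Real.dist_eq, NNReal.coe_one, one_mul]
    rw [show a - s - (a - t) = -(s - t) by ring, abs_neg]
  · rw [intervalIntegral.integral_comp_sub_left (fun t => cos t)]; simp
  · rw [intervalIntegral.integral_comp_sub_left (fun t => sin t)]; simp

theorem Reach.congr {T x y a b T' x' y' a' b' : ℝ} (h : Reach T x y a b)
    (hT : T = T') (hx : x = x') (hy : y = y')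
    (ha : cos a = cos a') (ha' : sin a = sin a') (hb : cos b = cos b') (hb' : sin b = sin b') :
    Reach T' x' y' a' b' := by
  subst hT hx hy
  obtain ⟨h0, θ, h1, h2, h3, h4, h5, h6, h7⟩ := h
  exact ⟨h0, θ, h1, h2.trans ha, h3.trans ha', h4.trans hb, h5.trans hb', h6, h7⟩

theorem Reach.trans {T x y a b U z w c : ℝ} (h : Reach T x y a b) (k : Reach U z w b c) :
    Reach (T + U) (x + z) (y + w) a c := by
  obtain ⟨h0, θ, h1, h2, h3, h4, h5, h6, h7⟩ := h
  obtain ⟨k0, η, k1, k2, k3, k4, k5, k6, k7⟩ := k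
  have hθc := h1.continuous
  have hηc := k1.continuous
  set ζ : ℝ → ℝ := fun t => θ (min t T) + (η (max (t - T) 0) - η 0) with hζ
  have hζl : LipschitzWith 1 ζ := by
    refine LipschitzWith.of_dist_le_mul fun s t => ?_
    have e1 := h1.dist_le_mul (min s T) (min t T)
    have e2 := k1.dist_le_mul (max (s - T) 0) (max (t - T) 0)
    have e3 : |min s T - min t T| + |max (s - T) 0 - max (t - T) 0| = |s - t| := by
      rcases le_total s T with hs | hs <;> rcases le_total t T with ht | ht
      · simp [hs, ht]
      · rw [min_eq_left hs, min_eq_right ht, max_eq_right (by linarith), max_eq_left (by linarith),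
          abs_of_nonpos (by linarith), abs_of_nonpos (by linarith), abs_of_nonpos (by linarith)]
        ring
      · rw [min_eq_right hs, min_eq_left ht, max_eq_left (by linarith), max_eq_right (by linarith),
          abs_of_nonneg (by linarith), abs_of_nonneg (by linarith), abs_of_nonneg (by linarith)]
        ring
      · simp [hs, ht]
    simp only [NNReal.coe_one, one_mul, Real.dist_eq] at e1 e2 ⊢
    rw [← e3]
    calc |ζ s - ζ t| = |(θ (min s T) - θ (min t T)) + (η (max (s - T) 0) - η (max (t - T) 0))| := by
          congr 1; simp only [hζ]; ring
      _ ≤ _ := (abs_add_le _ _).trans (add_le_add e1 e2)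
  have hζc := hζl.continuous
  have z1 : ∀ t, t ≤ T → ζ t = θ t := by
    intro t ht
    simp [hζ, ht]
  have z2 : ∀ t, T ≤ t → ζ t = θ T + (η (t - T) - η 0) := by
    intro t ht
    simp [hζ, ht]
  have z3 : ∀ t, T ≤ t → cos (ζ t) = cos (η (t - T)) := by
    intro t ht
    rw [z2 t ht, cos_add, cos_sub, sin_sub, h4, h5, k2, k3]
    linear_combination cos (η (t-T)) * sin_sq_add_cos_sq b
  have z4 : ∀ t, T ≤ t → sin (ζ t) = sin (η (t - T)) := by
    intro t ht
    rw [z2 t ht, sin_add, cos_sub, sin_sub, h4, h5, k2, k3]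
    linear_combination sin (η (t-T)) * sin_sq_add_cos_sq b
  refine ⟨by linarith, ζ, hζl, ?_, ?_, ?_, ?_, ?_, ?_⟩
  · rw [z1 0 h0, h2]
  · rw [z1 0 h0, h3]
  · rw [z3 _ (by linarith)]; simpa using k4
  · rw [z4 _ (by linarith)]; simpa using k5
  · rw [← intervalIntegral.integral_add_adjacent_intervals (b := T)
      (Continuous.intervalIntegrable (by fun_prop) _ _) (Continuous.intervalIntegrable (by fun_prop) _ _)]
    congr 1
    · rw [← h6]
      apply intervalIntegral.integral_congr
      intro t ht
      rw [Set.uIcc_of_le h0] at ht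
      simp only [z1 t ht.2]
    · have : (∫ t in T..(T+U), cos (ζ t)) = ∫ t in T..(T+U), cos (η (t - T)) := by
        apply intervalIntegral.integral_congr
        intro t ht
        rw [Set.uIcc_of_le (by linarith)] at ht
        exact z3 t ht.1
      rw [this, intervalIntegral.integral_comp_sub_right (fun t => cos (η t))]
      simpa using k6
  · rw [← intervalIntegral.integral_add_adjacent_intervals (b := T)
      (Continuous.intervalIntegrable (by fun_prop) _ _) (Continuous.intervalIntegrable (by fun_prop) _ _)]
    congr 1
    · rw [← h7]
      apply intervalIntegral.integral_congr
      intro t ht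
      rw [Set.uIcc_of_le h0] at ht
      simp only [z1 t ht.2]
    · have : (∫ t in T..(T+U), sin (ζ t)) = ∫ t in T..(T+U), sin (η (t - T)) := by
        apply intervalIntegral.integral_congr
        intro t ht
        rw [Set.uIcc_of_le (by linarith)] at ht
        exact z4 t ht.1
      rw [this, intervalIntegral.integral_comp_sub_right (fun t => sin (η t))]
      simpa using k7

theorem Reach.rot {T x y a b : ℝ} (h : Reach T x y a b) (c : ℝ) :
    Reach T (cos c * x - sin c * y) (sin c * x + cos c * y) (a + c) (b + c) := by
  obtain ⟨h0, θ, h1, h2, h3, h4, h5, h6, h7⟩ := h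
  have hθc := h1.continuous
  refine ⟨h0, fun t => θ t + c, ?_, ?_, ?_, ?_, ?_, ?_, ?_⟩
  · refine LipschitzWith.of_dist_le_mul fun s t => ?_
    simpa using h1.dist_le_mul s t
  · simp only [cos_add, h2, h3]
  · simp only [sin_add, h2, h3]
  · simp only [cos_add, h4, h5]
  · simp only [sin_add, h4, h5]
  · simp only [cos_add]
    rw [intervalIntegral.integral_sub (Continuous.intervalIntegrable (by fun_prop) _ _)
      (Continuous.intervalIntegrable (by fun_prop) _ _), intervalIntegral.integral_mul_const,
      intervalIntegral.integral_mul_const, h6, h7]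
    ring
  · simp only [sin_add]
    rw [intervalIntegral.integral_add (Continuous.intervalIntegrable (by fun_prop) _ _)
      (Continuous.intervalIntegrable (by fun_prop) _ _), intervalIntegral.integral_mul_const,
      intervalIntegral.integral_mul_const, h6, h7]
    ring

theorem Reach.refl {T x y a b : ℝ} (h : Reach T x y a b) :
    Reach T x (-y) (-a) (-b) := by
  obtain ⟨h0, θ, h1, h2, h3, h4, h5, h6, h7⟩ := h
  refine ⟨h0, fun t => - θ t, ?_, ?_, ?_, ?_, ?_, ?_, ?_⟩
  · refine LipschitzWith.of_dist_le_mul fun s t => ?_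
    simpa using h1.dist_le_mul s t
  all_goals simp [*]

theorem Reach.rev {T x y a b : ℝ} (h : Reach T x y a b) :
    Reach T x y b a := by
  obtain ⟨h0, θ, h1, h2, h3, h4, h5, h6, h7⟩ := h
  refine ⟨h0, fun t => θ (T - t), ?_, ?_, ?_, ?_, ?_, ?_, ?_⟩
  · refine LipschitzWith.of_dist_le_mul fun s t => ?_
    have := h1.dist_le_mul (T - s) (T - t)
    simp only [Real.dist_eq, NNReal.coe_one, one_mul] at this ⊢
    rwa [show T - s - (T - t) = -(s - t) by ring, abs_neg] at this
  · simp [*]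
  · simp [*]
  · simp [*]
  · simp [*]
  · rw [intervalIntegral.integral_comp_sub_left (fun t => cos (θ t))]; simpa using h6
  · rw [intervalIntegral.integral_comp_sub_left (fun t => sin (θ t))]; simpa using h7

theorem Reach.path {T x y a b : ℝ} (h : Reach T x y a b) :
    ∃ γ, IsBCPath T 0 0 a x y b γ := by
  obtain ⟨h0, θ, h1, h2, h3, h4, h5, h6, h7⟩ := h
  have hθc := h1.continuous
  have key : ∀ s t : ℝ, dist (!₂[cos (θ s), sin (θ s)]) (!₂[cos (θ t), sin (θ t)]) ≤ dist s t := by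
    intro s t
    have e := h1.dist_le_mul s t
    simp only [NNReal.coe_one, one_mul] at e
    refine le_trans ?_ e
    rw [EuclideanSpace.dist_eq, Real.sqrt_le_left dist_nonneg]
    simp only [Fin.sum_univ_two, Real.dist_eq, sq_abs]
    simp only [Matrix.cons_val_zero, Matrix.cons_val_one]
    have e1 : (cos (θ s) - cos (θ t)) ^ 2 + (sin (θ s) - sin (θ t)) ^ 2
        = 4 * sin ((θ s - θ t)/2) ^ 2 := by
      have : cos (θ s - θ t) = 1 - 2 * sin ((θ s - θ t)/2) ^ 2 := by
        have := cos_two_mul ((θ s - θ t)/2)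
        have h2 := sin_sq_add_cos_sq ((θ s - θ t)/2)
        rw [show 2 * ((θ s - θ t)/2) = θ s - θ t by ring] at this
        linarith
      rw [cos_sub] at this
      linear_combination sin_sq_add_cos_sq (θ s) + sin_sq_add_cos_sq (θ t) - 2 * this
    rw [e1]
    have e2 : |sin ((θ s - θ t)/2)| ≤ |(θ s - θ t)/2| := abs_sin_le_abs
    have e3 := sq_le_sq.mpr e2
    nlinarith
  refine ⟨fun t => !₂[∫ u in (0:ℝ)..t, cos (θ u), ∫ u in (0:ℝ)..t, sin (θ u)], h0,
    fun t => !₂[cos (θ t), sin (θ t)], ?_, ?_, ?_, ?_, ?_, ?_, ?_, ?_⟩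
  · intro t ht
    apply HasDerivAt.hasDerivWithinAt
    rw [hasDerivAt_iff_hasFDerivAt, ← hasFDerivWithinAt_univ, hasFDerivWithinAt_euclidean]
    intro i
    rw [hasFDerivWithinAt_univ, hasFDerivAt_iff_hasDerivAt]
    fin_cases i
    · simp
      exact intervalIntegral.integral_hasDerivAt_right (Continuous.intervalIntegrable (by fun_prop) _ _)
        (Continuous.stronglyMeasurableAtFilter (by fun_prop) _ _) (Continuous.continuousAt (by fun_prop))
    · simp
      exact intervalIntegral.integral_hasDerivAt_right (Continuous.intervalIntegrable (by fun_prop) _ _)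
        (Continuous.stronglyMeasurableAtFilter (by fun_prop) _ _) (Continuous.continuousAt (by fun_prop))
  · fun_prop
  · intro t ht
    simp [EuclideanSpace.norm_eq]
  · refine LipschitzOnWith.of_dist_le_mul fun s _ t _ => ?_
    simpa using key s t
  · simp
  · simp [h2, h3]
  · simp [h6, h7]
  · simp [h4, h5]

theorem polar_up (x y : ℝ) (hy : 0 ≤ y) : ∃ r ψ : ℝ, 0 ≤ r ∧ r ^ 2 = x ^ 2 + y ^ 2 ∧ 0 ≤ ψ ∧ ψ ≤ π ∧
    x = r * cos ψ ∧ y = r * sin ψ := by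
  refine ⟨‖(⟨x, y⟩ : ℂ)‖, Complex.arg ⟨x, y⟩, norm_nonneg _, ?_, ?_, Complex.arg_le_pi _, ?_, ?_⟩
  · rw [Complex.sq_norm, Complex.normSq_mk]; ring
  · exact Complex.arg_nonneg_iff.mpr hy
  · exact (Complex.norm_mul_cos_arg ⟨x, y⟩).symm
  · exact (Complex.norm_mul_sin_arg ⟨x, y⟩).symm

theorem polar_right (x y : ℝ) (hx : 0 ≤ x) : ∃ r ψ : ℝ, 0 ≤ r ∧ r ^ 2 = x ^ 2 + y ^ 2 ∧
    -(π / 2) ≤ ψ ∧ ψ ≤ π / 2 ∧ x = r * cos ψ ∧ y = r * sin ψ := by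
  have h : |Complex.arg ⟨x, y⟩| ≤ π / 2 := Complex.abs_arg_le_pi_div_two_iff.mpr hx
  refine ⟨‖(⟨x, y⟩ : ℂ)‖, Complex.arg ⟨x, y⟩, norm_nonneg _, ?_, (abs_le.mp h).1, (abs_le.mp h).2, ?_, ?_⟩
  · rw [Complex.sq_norm, Complex.normSq_mk]; ring
  · exact (Complex.norm_mul_cos_arg ⟨x, y⟩).symm
  · exact (Complex.norm_mul_sin_arg ⟨x, y⟩).symm

theorem polar_sq_eq {r ρ a b : ℝ} (hr : 0 ≤ r) (hρ : 0 ≤ ρ) (h : r ^ 2 = a) (h' : ρ ^ 2 = b)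
    (hab : a = b) : r = ρ := by
  have : r ^ 2 = ρ ^ 2 := by rw [h, h', hab]
  exact (sq_eq_sq₀ hr hρ).mp this

/-- tangent for RSL -/
theorem tangent_rsl (x y : ℝ) (hy : 0 ≤ y) (h4 : 4 ≤ x ^ 2 + y ^ 2) :
    ∃ S θ : ℝ, 0 ≤ S ∧ S ^ 2 = x ^ 2 + y ^ 2 - 4 ∧ -(π / 2) ≤ θ ∧ θ ≤ π ∧
      x = S * cos θ - 2 * sin θ ∧ y = S * sin θ + 2 * cos θ := by
  obtain ⟨r, ω, hr, hr2, hω0, hω1, hx, hy'⟩ := polar_up x y hy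
  have hS : √(x ^ 2 + y ^ 2 - 4) ^ 2 = x ^ 2 + y ^ 2 - 4 := Real.sq_sqrt (by linarith)
  obtain ⟨ρ, κ, hρ, hρ2, hκ2, hκ1, hS', h2⟩ := polar_right (√(x ^ 2 + y ^ 2 - 4)) 2 (Real.sqrt_nonneg _)
  have hρ' : 0 < ρ := by
    rcases hρ.lt_or_eq with h | h
    · exact h
    · rw [← h] at h2; norm_num at h2
  have e : r = ρ := polar_sq_eq hr hρ hr2 hρ2 (by rw [hS]; ring)
  subst e
  have hκ0 : 0 ≤ κ := by
    by_contra hneg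
    push Not at hneg
    have := sin_nonpos_of_nonpos_of_neg_pi_le hneg.le (by linarith [pi_pos])
    nlinarith
  refine ⟨√(x ^ 2 + y ^ 2 - 4), ω - κ, Real.sqrt_nonneg _, hS, by linarith, by linarith, ?_, ?_⟩
  · rw [hS']
    have := cos_add (ω - κ) κ
    rw [sub_add_cancel] at this
    linear_combination hx + r * this - (- sin (ω - κ) * h2)
  · rw [hS']
    have := sin_add (ω - κ) κ
    rw [sub_add_cancel] at this
    linear_combination hy' + r * this - (cos (ω - κ) * h2)

/-- tangent for LSR -/
theorem tangent_lsr (x y : ℝ) (hx0 : 0 ≤ x) (h4 : 4 ≤ x ^ 2 + y ^ 2) :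
    ∃ S θ : ℝ, 0 ≤ S ∧ S ^ 2 = x ^ 2 + y ^ 2 - 4 ∧ -(π / 2) ≤ θ ∧ θ ≤ π ∧
      x = S * cos θ + 2 * sin θ ∧ y = S * sin θ - 2 * cos θ := by
  obtain ⟨r, ω, hr, hr2, hω0, hω1, hx, hy'⟩ := polar_right x y hx0
  have hS : √(x ^ 2 + y ^ 2 - 4) ^ 2 = x ^ 2 + y ^ 2 - 4 := Real.sq_sqrt (by linarith)
  obtain ⟨ρ, κ, hρ, hρ2, hκ2, hκ1, hS', h2⟩ := polar_right (√(x ^ 2 + y ^ 2 - 4)) 2 (Real.sqrt_nonneg _)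
  have e : r = ρ := polar_sq_eq hr hρ hr2 hρ2 (by rw [hS]; ring)
  subst e
  have hκ0 : 0 ≤ κ := by
    by_contra hneg
    push Not at hneg
    have := sin_nonpos_of_nonpos_of_neg_pi_le hneg.le (by linarith [pi_pos])
    nlinarith
  refine ⟨√(x ^ 2 + y ^ 2 - 4), ω + κ, Real.sqrt_nonneg _, hS, by linarith, by linarith, ?_, ?_⟩
  · rw [hS']
    have := cos_sub (ω + κ) κ
    rw [add_sub_cancel_right] at this
    linear_combination hx + r * this - (sin (ω + κ) * h2)
  · rw [hS']
    have := sin_sub (ω + κ) κ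
    rw [add_sub_cancel_right] at this
    linear_combination hy' + r * this - (-cos (ω + κ) * h2)

theorem word_LSL (h r ψ : ℝ) (hr : 0 ≤ r) (h1 : -h ≤ ψ) (h2 : ψ ≤ h) :
    Reach (r + 2 * h) (r * cos ψ + 2 * sin h) (r * sin ψ) (-h) h := by
  refine (((Reach.left (-h) ψ h1).trans (Reach.straight r ψ hr)).trans (Reach.left ψ h h2)).congr
    ?_ ?_ ?_ rfl rfl rfl rfl
  · ring
  · rw [sin_neg]; ring
  · rw [cos_neg]; ring

theorem word_RSR (h r ψ : ℝ) (hr : 0 ≤ r) (h1 : ψ - 2 * π ≤ -h) (h2 : h ≤ ψ) :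
    Reach (r + 2 * π - 2 * h) (r * cos ψ - 2 * sin h) (r * sin ψ) (-h) h := by
  have a := (Reach.right (-h) (ψ - 2 * π) h1).congr (b' := ψ) rfl rfl rfl rfl rfl
    (by simp) (by simp)
  refine ((a.trans (Reach.straight r ψ hr)).trans (Reach.right ψ h h2)).congr
    ?_ ?_ ?_ rfl rfl rfl rfl
  · ring
  · rw [sin_neg, sin_sub_two_pi]; ring
  · rw [cos_neg, cos_sub_two_pi]; ring

theorem word_RSL1 (h S θ : ℝ) (hS : 0 ≤ S) (hh : 0 ≤ h) (h1 : θ ≤ -h) :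
    Reach (S - 2 * θ) (S * cos θ - 2 * sin θ) (S * sin θ + 2 * cos θ - 2 * cos h) (-h) h := by
  refine (((Reach.right (-h) θ h1).trans (Reach.straight S θ hS)).trans
    (Reach.left θ h (by linarith))).congr ?_ ?_ ?_ rfl rfl rfl rfl
  · ring
  · rw [sin_neg]; ring
  · rw [cos_neg]; ring

theorem word_RSL2 (h S θ : ℝ) (hS : 0 ≤ S) (h1 : θ - 2 * π ≤ -h) (h2 : θ ≤ h) :
    Reach (S + 2 * π - 2 * θ) (S * cos θ - 2 * sin θ) (S * sin θ + 2 * cos θ - 2 * cos h) (-h) h := by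
  have a := (Reach.right (-h) (θ - 2 * π) h1).congr (b' := θ) rfl rfl rfl rfl rfl
    (by simp) (by simp)
  refine ((a.trans (Reach.straight S θ hS)).trans
    (Reach.left θ h (by linarith))).congr ?_ ?_ ?_ rfl rfl rfl rfl
  · ring
  · rw [sin_neg, sin_sub_two_pi]; ring
  · rw [cos_neg, cos_sub_two_pi]; ring

theorem word_LSR (h S θ : ℝ) (hS : 0 ≤ S) (hh : 0 ≤ h) (h1 : h ≤ θ) :
    Reach (S + 2 * θ) (S * cos θ + 2 * sin θ) (S * sin θ - 2 * cos θ + 2 * cos h) (-h) h := by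
  refine (((Reach.left (-h) θ (by linarith)).trans (Reach.straight S θ hS)).trans
    (Reach.right θ h (by linarith))).congr ?_ ?_ ?_ rfl rfl rfl rfl
  · ring
  · rw [sin_neg]; ring
  · rw [cos_neg]; ring

theorem word_RLR (h ψ ε : ℝ) (hε : 0 ≤ ε) (h0 : 0 ≤ h) (hh : h ≤ π / 2) (hψ : 0 ≤ ψ)
    (h1 : ψ + h ≤ π / 2 + ε) :
    Reach (2 * π - 2 * h + 4 * ε) (4 * cos ε * cos ψ - 2 * sin h) (4 * cos ε * sin ψ) (-h) h := by
  refine (((Reach.right (-h) (ψ - ε - π / 2) (by linarith)).trans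
    (Reach.left _ (ψ + ε + π / 2) (by linarith [pi_pos]))).trans
    (Reach.right _ h (by linarith))).congr ?_ ?_ ?_ rfl rfl rfl rfl
  · ring
  · rw [sin_neg, sin_sub_pi_div_two, sin_add_pi_div_two, cos_sub, cos_add]; ring
  · rw [cos_neg, cos_sub_pi_div_two, cos_add_pi_div_two, sin_sub, sin_add]; ring

theorem word_LRL (h ψ ε : ℝ) (hε : 0 ≤ ε) (hψ : ψ ≤ π)
    (h1 : 3 * π / 2 ≤ ψ + h + ε) :
    Reach (2 * h + 4 * ε) (4 * cos ε * cos ψ + 2 * sin h) (4 * cos ε * sin ψ) (-h) h := by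
  have hp := pi_pos
  have a := (Reach.left (-h) (ψ + ε + π / 2 - 2 * π) (by linarith)).congr (b' := ψ + ε + π / 2)
    rfl rfl rfl rfl rfl (by simp) (by simp)
  have b := (Reach.right (ψ + ε + π / 2) (ψ - ε - π / 2) (by linarith))
  refine ((a.trans b).trans
    (Reach.left _ h (by linarith))).congr ?_ ?_ ?_ rfl rfl rfl rfl
  · ring
  · rw [sin_sub_two_pi, sin_neg, sin_sub_pi_div_two, sin_add_pi_div_two, cos_sub, cos_add]; ring
  · rw [cos_sub_two_pi, cos_neg, cos_sub_pi_div_two, cos_add_pi_div_two, sin_sub, sin_add]; ring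

theorem use_RLR (h X Y D : ℝ) (h0 : 0 ≤ h) (hh : h ≤ π / 2) (hY : 0 ≤ Y) (hD : 0 < D)
    (hD2 : D ^ 2 = (X + 2 * sin h) ^ 2 + Y ^ 2) (hW : X ^ 2 + (Y - 2 * cos h) ^ 2 ≤ 4) :
    Reach (2 * π - 2 * h + 4 * arccos (D / 4)) X Y (-h) h := by
  obtain ⟨r, ψ, hr, hr2, hψ0, hψ1, hx, hy⟩ := polar_up (X + 2 * sin h) Y hY
  have e : r = D := polar_sq_eq hr hD.le hr2 hD2 rfl
  subst e
  have hsc := sin_sq_add_cos_sq h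
  have k1 : r / 4 ≤ sin (ψ + h) := by
    have : r * (r / 4) ≤ r * sin (ψ + h) := by
      have e : r * sin (ψ + h) = Y * cos h + (X + 2 * sin h) * sin h := by
        rw [sin_add]; linear_combination -cos h * hy - sin h * hx
      rw [e]
      nlinarith
    exact le_of_mul_le_mul_left this hD
  have k2 := sin_le_one (ψ + h)
  have k3 : cos (arccos (r / 4)) = r / 4 := cos_arccos (by linarith) (by linarith)
  have k4 : ψ + h ≤ π / 2 + arccos (r / 4) := by
    by_contra hc
    push Not at hc
    have := cos_lt_cos_of_nonneg_of_le_pi (x := arccos (r / 4)) (y := ψ + h - π / 2)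
      (arccos_nonneg _) (by linarith) (by linarith)
    rw [cos_sub_pi_div_two, k3] at this
    linarith
  refine (word_RLR h ψ _ (arccos_nonneg _) h0 hh hψ0 k4).congr rfl ?_ ?_ rfl rfl rfl rfl
  · rw [k3]; linear_combination -hx
  · rw [k3]; linear_combination -hy

theorem use_LRL (h X Y D : ℝ) (h0 : 0 ≤ h) (hh : h ≤ π / 2) (hY : 0 ≤ Y) (hD : 0 < D)
    (hD2 : D ^ 2 = (X - 2 * sin h) ^ 2 + Y ^ 2) (hW : X ^ 2 + (Y + 2 * cos h) ^ 2 ≤ 4) :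
    Reach (2 * h + 4 * arccos (D / 4)) X Y (-h) h := by
  obtain ⟨r, ψ, hr, hr2, hψ0, hψ1, hx, hy⟩ := polar_up (X - 2 * sin h) Y hY
  have e : r = D := polar_sq_eq hr hD.le hr2 hD2 rfl
  subst e
  have hsc := sin_sq_add_cos_sq h
  have k1 : r / 4 ≤ - sin (ψ + h) := by
    have : r * (r / 4) ≤ r * (- sin (ψ + h)) := by
      have e : r * (- sin (ψ + h)) = -(Y * cos h + (X - 2 * sin h) * sin h) := by
        rw [sin_add]; linear_combination cos h * hy + sin h * hx
      rw [e]
      nlinarith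
    exact le_of_mul_le_mul_left this hD
  have k2 := neg_one_le_sin (ψ + h)
  have k3 : cos (arccos (r / 4)) = r / 4 := cos_arccos (by linarith) (by linarith)
  have k5 : π ≤ ψ + h := by
    by_contra hc
    push Not at hc
    have := sin_nonneg_of_nonneg_of_le_pi (x := ψ + h) (by linarith) hc.le
    linarith
  have k4 : 3 * π / 2 ≤ ψ + h + arccos (r / 4) := by
    by_contra hc
    push Not at hc
    have := cos_lt_cos_of_nonneg_of_le_pi (x := arccos (r / 4)) (y := 3 * π / 2 - (ψ + h))
      (arccos_nonneg _) (by linarith [pi_pos]) (by linarith)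
    rw [show 3 * π / 2 - (ψ + h) = π - (ψ + h - π / 2) by ring, cos_pi_sub, cos_sub_pi_div_two, k3] at this
    linarith
  refine (word_LRL h ψ _ (arccos_nonneg _) hψ1 k4).congr rfl ?_ ?_ rfl rfl rfl rfl
  · rw [k3]; linear_combination -hx
  · rw [k3]; linear_combination -hy

theorem arccos_le_of {x e : ℝ} (he0 : 0 ≤ e) (he : e ≤ π) (h : cos e ≤ x) : arccos x ≤ e := by
  rw [← arccos_cos he0 he]
  exact arccos_le_arccos h

/-- the CCC case -/
theorem case_CCC (h X Y d : ℝ) (h0 : 0 ≤ h) (hh : h ≤ π / 2) (hY : 0 ≤ Y) (hd : 0 ≤ d)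
    (hd2 : d ^ 2 = X ^ 2 + Y ^ 2) (hW : X ^ 2 + (Y + 2 * cos h) ^ 2 < 4) :
    ∃ T, T ≤ d + 7 * π / 3 ∧ Reach T X Y (-h) h := by
  have hsc := sin_sq_add_cos_sq h
  have hs0 : 0 ≤ sin h := sin_nonneg_of_nonneg_of_le_pi h0 (by linarith [pi_pos])
  have hc0 : 0 ≤ cos h := cos_nonneg_of_neg_pi_div_two_le_of_le (by linarith [pi_pos]) hh
  have hds : d < 2 * sin h := by
    by_contra hcon
    push Not at hcon
    nlinarith [mul_nonneg hY hc0]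
  have hXd : |X| ≤ d := abs_le_of_sq_le_sq (by nlinarith) hd
  obtain ⟨hX1, hX2⟩ := abs_le.mp hXd
  have hp := pi_gt_three
  set k := π / 2 - h with hk
  have hsk : sin h = cos k := by rw [hk, cos_pi_div_two_sub]
  have hck : cos h = sin k := by rw [hk, sin_pi_div_two_sub]
  have hk0 : 0 ≤ k := by linarith
  have hk1 : k ≤ π / 2 := by linarith
  have hpi3 : ∀ D : ℝ, 0 ≤ D → 4 ≤ D ^ 2 → arccos (D / 4) ≤ π / 3 := by
    intro D hD hD4
    apply arccos_le_of (by linarith) (by linarith)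
    rw [cos_pi_div_three]
    nlinarith
  have hpos : ∀ D : ℝ, 0 ≤ D → 4 ≤ D ^ 2 → 0 < D := by
    intro D hD hD4
    rcases hD.lt_or_eq with hl | he
    · exact hl
    · rw [← he] at hD4; norm_num at hD4
  rcases le_total d (2 * k) with hdk | hdk
  · -- LRL
    set D := √((X - 2 * sin h) ^ 2 + Y ^ 2) with hDdef
    have hD0 : 0 ≤ D := Real.sqrt_nonneg _
    have hD2 : D ^ 2 = (X - 2 * sin h) ^ 2 + Y ^ 2 := Real.sq_sqrt (by positivity)
    have hDl : 2 * sin h - d ≤ D := by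
      apply abs_le_of_sq_le_sq' _ hD0 |>.2
      nlinarith
    refine ⟨_, ?_, use_LRL h X Y D h0 hh hY (by linarith) hD2 hW.le⟩
    have : arccos (D / 4) ≤ π / 3 + (d + 2 * k) / 4 := by
      apply arccos_le_of (by positivity) (by linarith)
      have hj : 2 / π * k ≤ sin k := mul_le_sin hk0 hk1
      have hs3 : k ≤ √3 * sin k := by
        have a1 : (1.7:ℝ) ≤ √3 := by
          apply Real.le_sqrt_of_sq_le; norm_num
        have a2 : sin k * π ≥ 2 * k := by
          have := mul_le_mul_of_nonneg_right hj pi_pos.le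
          have e : 2 / π * k * π = 2 * k := by field_simp
          linarith
        have a3 : π ≤ 3.15 := by linarith [pi_lt_d2]
        have a4 : 0 ≤ sin k := by rw [← hck]; exact hc0
        nlinarith
      have m1 : cos (π / 3 + (d + 2 * k) / 4) - cos (π / 3 + k) ≤ |(π / 3 + (d + 2 * k) / 4) - (π / 3 + k)| := by
        have := abs_cos_sub_cos_le (π / 3 + (d + 2 * k) / 4) (π / 3 + k)
        exact (le_abs_self _).trans this
      rw [abs_of_nonpos (by linarith), cos_add (π/3) k, cos_pi_div_three, sin_pi_div_three] at m1
      linarith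
    linarith
  · have hk2 : 4 ≤ d ^ 2 + 4 * sin h ^ 2 := by
      have : sin k ≤ k := sin_le hk0
      rw [← hck] at this
      nlinarith
    rcases le_total 0 X with hX | hX
    · set D := √((X + 2 * sin h) ^ 2 + Y ^ 2) with hDdef
      have hD0 : 0 ≤ D := Real.sqrt_nonneg _
      have hD2 : D ^ 2 = (X + 2 * sin h) ^ 2 + Y ^ 2 := Real.sq_sqrt (by positivity)
      have hD4 : 4 ≤ D ^ 2 := by linarith [mul_nonneg hX hs0]
      refine ⟨_, ?_, use_RLR h X Y D h0 hh hY (hpos D hD0 hD4) hD2 (by linarith [mul_nonneg hY hc0])⟩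
      have := hpi3 D hD0 hD4
      linarith
    · set D := √((X - 2 * sin h) ^ 2 + Y ^ 2) with hDdef
      have hD0 : 0 ≤ D := Real.sqrt_nonneg _
      have hD2 : D ^ 2 = (X - 2 * sin h) ^ 2 + Y ^ 2 := Real.sq_sqrt (by positivity)
      have hD4 : 4 ≤ D ^ 2 := by linarith [mul_nonneg (neg_nonneg.mpr hX) hs0]
      refine ⟨_, ?_, use_LRL h X Y D h0 hh hY (hpos D hD0 hD4) hD2 hW.le⟩
      have := hpi3 D hD0 hD4
      linarith

/-- the LSR case -/
theorem case_LSR (h X Y d : ℝ) (h0 : 0 < h) (hh : h ≤ π / 2) (hX : 0 ≤ X) (hY : 0 ≤ Y) (hd : 0 ≤ d)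
    (hd2 : d ^ 2 = X ^ 2 + Y ^ 2) (hFL : -2 * sin h ^ 2 ≤ cos h * Y - sin h * X)
    (hW : 4 ≤ X ^ 2 + (Y - 2 * cos h) ^ 2) :
    ∃ T, T ≤ d + 7 * π / 3 ∧ Reach T X Y (-h) h := by
  have hp := pi_pos
  have hsc := sin_sq_add_cos_sq h
  have hs0 : 0 < sin h := sin_pos_of_pos_of_lt_pi h0 (by linarith [pi_pos])
  have hc0 : 0 ≤ cos h := cos_nonneg_of_neg_pi_div_two_le_of_le (by linarith [pi_pos]) hh
  obtain ⟨S, θ, hS, hS2, hθ0, hθ1, hx, hy⟩ := tangent_lsr X (Y - 2 * cos h) hX hW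
  have hθ : h ≤ θ := by
    by_contra hcon
    push Not at hcon
    have hth := sin_sq_add_cos_sq θ
    rcases le_or_gt 0 θ with hθp | hθn
    · have f1 : S * sin (h - θ) ≤ 2 * (1 - cos (h - θ)) := by
        rw [sin_sub, cos_sub]
        have hy2 : Y = S * sin θ - 2 * cos θ + 2 * cos h := by linarith
        rw [hx, hy2] at hFL
        nlinarith
      have hzs : 0 < sin (h - θ) := sin_pos_of_pos_of_lt_pi (by linarith) (by linarith)
      have hts : 0 ≤ sin θ := sin_nonneg_of_nonneg_of_le_pi hθp (by linarith)
      have hzc : cos (h - θ) < 1 := by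
        have := sin_sq_add_cos_sq (h - θ)
        nlinarith
      have f2 : 2 * (cos θ - cos h) ≤ S * sin θ := by linarith
      have f3 := mul_le_mul_of_nonneg_left f1 hts
      have f4 := mul_le_mul_of_nonneg_left f2 hzs.le
      have e1 : sin h = sin (h - θ) * cos θ + cos (h - θ) * sin θ := by
        rw [← sin_add]; congr 1; ring
      have e2 : sin θ = sin h * cos (h - θ) - cos h * sin (h - θ) := by
        rw [← sin_sub]; congr 1; ring
      have f5 : sin h ≤ sin h * cos (h - θ) := by nlinarith
      nlinarith
    · have hσ : sin θ < 0 := sin_neg_of_neg_of_neg_pi_lt hθn (by linarith)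
      have hcσ : 0 ≤ cos θ := cos_nonneg_of_neg_pi_div_two_le_of_le (by linarith) (by linarith)
      have hcσ1 : cos θ < 1 := by nlinarith
      have hch1 := cos_le_one h
      -- X ≥ 0 and Y ≥ 0
      have g1 : 0 ≤ S * cos θ + 2 * sin θ := by linarith
      have g2 : 0 ≤ S * sin θ - 2 * cos θ + 2 * cos h := by linarith
      have g3 := mul_nonneg g1 (neg_nonneg.mpr hσ.le)
      have g4 := mul_nonneg g2 hcσ
      nlinarith
  refine ⟨_, ?_, (word_LSR h S θ hS h0.le hθ).congr rfl ?_ ?_ rfl rfl rfl rfl⟩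
  · have : S ≤ d := by
      apply abs_le_of_sq_le_sq' _ hd |>.2
      nlinarith [mul_nonneg hY hc0]
    linarith
  · linarith
  · linarith

theorem rsl_tau (h τ : ℝ) (hh : h ≤ π / 2) (hτ1 : π / 6 ≤ τ) (hτ2 : τ ≤ h)
    (hs : 1 / 2 ≤ sin τ) (hlt : 2 * h + 4 * τ + 2 * sin τ < 5 * π / 3) :
    2 * τ - 2 * cos h * sin τ ≤ π / 3 := by
  have hp := pi_gt_three
  have hp2 : π < 3.15 := pi_lt_d2
  have hc : sin (2 * τ - π / 3 + 1 / 2) ≤ cos h := by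
    rw [← cos_pi_div_two_sub]
    apply cos_le_cos_of_nonneg_of_le_pi <;> linarith
  have hj := mul_le_sin (x := 2 * τ - π / 3 + 1 / 2) (by linarith) (by linarith)
  have hj2 : 2 * (2 * τ - π / 3 + 1 / 2) ≤ π * sin (2 * τ - π / 3 + 1 / 2) := by
    have := mul_le_mul_of_nonneg_left hj pi_pos.le
    have e : π * (2 / π * (2 * τ - π / 3 + 1 / 2)) = 2 * (2 * τ - π / 3 + 1 / 2) := by field_simp
    linarith
  have hy : 2 * τ - π / 3 ≤ sin (2 * τ - π / 3 + 1 / 2) := by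
    by_contra hcon
    push Not at hcon
    have h1 : π * sin (2 * τ - π / 3 + 1 / 2) ≤ π * (2 * τ - π / 3) :=
      mul_le_mul_of_nonneg_left hcon.le pi_pos.le
    have h2 : 2 * τ - π / 3 ≤ 0.7 := by linarith
    have h3 : (π - 2) * (2 * τ - π / 3) ≤ 1.15 * 0.7 :=
      mul_le_mul (by linarith) h2 (by linarith) (by norm_num)
    linarith
  have hc0 : 0 ≤ cos h := by linarith
  have := mul_le_mul_of_nonneg_left hs hc0
  linarith

theorem case_RSL (h X Y d : ℝ) (h0 : 0 < h) (hh : h ≤ π / 2) (hY : 0 ≤ Y) (hd : 0 ≤ d)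
    (hd2 : d ^ 2 = X ^ 2 + Y ^ 2) (hFR : cos h * Y - sin h * X ≤ 2 * sin h ^ 2)
    (hW : 4 ≤ X ^ 2 + (Y + 2 * cos h) ^ 2)
    (hR : 0 ≤ X → X ^ 2 + (Y - 2 * cos h) ^ 2 ≤ 4) :
    ∃ T, T ≤ d + 7 * π / 3 ∧ Reach T X Y (-h) h := by
  have hp := pi_pos
  have hsc := sin_sq_add_cos_sq h
  have hs0 : 0 < sin h := sin_pos_of_pos_of_lt_pi h0 (by linarith [pi_pos])
  have hc0 : 0 ≤ cos h := cos_nonneg_of_neg_pi_div_two_le_of_le (by linarith [pi_pos]) hh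
  have hc1 := cos_le_one h
  obtain ⟨S, θ, hS, hS2, hθ0, hθ1, hx, hy⟩ := tangent_rsl X (Y + 2 * cos h) (by linarith) hW
  have hth := sin_sq_add_cos_sq θ
  have hy2 : Y = S * sin θ + 2 * cos θ - 2 * cos h := by linarith
  have hdS : S - 2 * cos h * sin θ ≤ d := by
    apply abs_le_of_sq_le_sq' _ hd |>.2
    have e : d ^ 2 = (S - 2 * cos h * sin θ) ^ 2 + (2 - 2 * cos h * cos θ) ^ 2 := by
      rw [hd2, hx, hy2]
      linear_combination (S ^ 2 + 4 - 4 * cos h ^ 2) * hth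
    nlinarith [sq_nonneg (2 - 2 * cos h * cos θ)]
  rcases le_or_gt θ (-h) with hθa | hθa
  · have : sin θ ≤ 0 := sin_nonpos_of_nonpos_of_neg_pi_le (by linarith) (by linarith)
    refine ⟨_, ?_, (word_RSL1 h S θ hS h0.le hθa).congr rfl hx.symm hy2.symm rfl rfl rfl rfl⟩
    nlinarith [mul_nonneg hc0 (neg_nonneg.mpr this)]
  rcases le_or_gt θ h with hθb | hθb
  · have hword : Reach (S + 2 * π - 2 * θ) X Y (-h) h :=
      (word_RSL2 h S θ hS (by linarith) hθb).congr rfl hx.symm hy2.symm rfl rfl rfl rfl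
    rcases le_or_gt 0 θ with hθp | hθn
    · refine ⟨_, ?_, hword⟩
      have g1 : sin θ ≤ θ := sin_le hθp
      have g2 : 0 ≤ sin θ := sin_nonneg_of_nonneg_of_le_pi hθp (by linarith)
      have g3 := mul_le_mul_of_nonneg_right hc1 g2
      linarith
    · obtain ⟨τ, rfl⟩ : ∃ τ, θ = -τ := ⟨-θ, by ring⟩
      rw [sin_neg] at *
      rw [cos_neg] at *
      have hτs : 0 ≤ sin τ := sin_nonneg_of_nonneg_of_le_pi (by linarith) (by linarith)
      have hτc : 0 ≤ cos τ := cos_nonneg_of_neg_pi_div_two_le_of_le (by linarith) (by linarith)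
      by_cases hgood : 2 * τ - 2 * cos h * sin τ ≤ π / 3
      · exact ⟨_, by linarith, hword⟩
      · have hτ6 : π / 6 ≤ τ := by
          by_contra hcon
          push Not at hcon
          exact hgood (by nlinarith [mul_nonneg hc0 hτs])
        have hτh : 1 / 2 ≤ sin τ := by
          rw [← sin_pi_div_six]
          exact sin_le_sin_of_le_of_le_pi_div_two (by linarith) (by linarith) hτ6
        have hXl : 2 * sin τ ≤ X := by
          have := mul_nonneg hS hτc
          linarith
        have hsh : sin τ ≤ sin h :=
          sin_le_sin_of_le_of_le_pi_div_two (by linarith) (by linarith) (by linarith)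
        set D := √((X + 2 * sin h) ^ 2 + Y ^ 2) with hDdef
        have hD0 : 0 ≤ D := Real.sqrt_nonneg _
        have hD2 : D ^ 2 = (X + 2 * sin h) ^ 2 + Y ^ 2 := Real.sq_sqrt (by positivity)
        have hDl : X + 2 * sin h ≤ D := by
          apply abs_le_of_sq_le_sq' _ hD0 |>.2
          linarith [sq_nonneg Y]
        have hXd : X ≤ d := by
          apply abs_le_of_sq_le_sq' _ hd |>.2
          linarith [sq_nonneg Y]
        refine ⟨_, ?_, use_RLR h X Y D h0.le hh hY (by linarith) hD2 (hR (by linarith))⟩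
        have hε : arccos (D / 4) ≤ π / 2 - τ := by
          apply arccos_le_of (by linarith) (by linarith)
          rw [cos_pi_div_two_sub]
          linarith
        by_contra hcon
        push Not at hcon
        exact hgood (rsl_tau h τ hh hτ6 (by linarith) hτh (by linarith))
  · exfalso
    have hys : 0 < sin (θ - h) := sin_pos_of_pos_of_lt_pi (by linarith) (by linarith)
    have hts : 0 ≤ sin θ := sin_nonneg_of_nonneg_of_le_pi (by linarith) (by linarith)
    have f1 : S * sin (θ - h) ≤ 2 * (1 - cos (θ - h)) := by
      rw [sin_sub, cos_sub]
      rw [hx, hy2] at hFR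
      nlinarith
    have hyc : cos (θ - h) < 1 := by
      have := sin_sq_add_cos_sq (θ - h)
      nlinarith
    have f2 : 2 * (cos h - cos θ) ≤ S * sin θ := by linarith
    have f3 := mul_le_mul_of_nonneg_left f1 hts
    have f4 := mul_le_mul_of_nonneg_left f2 hys.le
    have e1 : sin h = sin θ * cos (θ - h) - cos θ * sin (θ - h) := by
      rw [← sin_sub]; congr 1; ring
    have e2 : sin θ = sin (θ - h) * cos h + cos (θ - h) * sin h := by
      rw [← sin_add]; congr 1; ring
    have f6 : sin (θ - h) * (cos h - cos θ) ≤ sin θ * (1 - cos (θ - h)) := by linarith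
    have f5 : sin h ≤ sin h * cos (θ - h) := by linarith
    have hs1 : 0 < sin h := sin_pos_of_pos_of_lt_pi (by linarith) (by linarith)
    have f7 := mul_pos hs1 (sub_pos.mpr hyc)
    linarith

theorem main_up (h X Y d : ℝ) (h0 : 0 ≤ h) (hh : h ≤ π / 2) (hY : 0 ≤ Y) (hd : 0 ≤ d)
    (hd2 : d ^ 2 = X ^ 2 + Y ^ 2) :
    ∃ T, T ≤ d + 7 * π / 3 ∧ Reach T X Y (-h) h := by
  have hp := pi_pos
  have hsc := sin_sq_add_cos_sq h
  have hs0 : 0 ≤ sin h := sin_nonneg_of_nonneg_of_le_pi h0 (by linarith [pi_pos])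
  have hsh : sin h ≤ h := sin_le h0
  have hXd : |X| ≤ d := abs_le_of_sq_le_sq (by linarith [sq_nonneg Y]) hd
  obtain ⟨hX1, hX2⟩ := abs_le.mp hXd
  obtain ⟨r, ψ, hr, hr2, hψ0, hψ1, hx, hy⟩ := polar_up (X - 2 * sin h) Y hY
  obtain ⟨ρ, ξ, hρ, hρ2, hξ0, hξ1, hx', hy'⟩ := polar_up (X + 2 * sin h) Y hY
  have hrd : r ≤ d + 2 * sin h := by
    apply abs_le_of_sq_le_sq' _ (by linarith) |>.2
    linarith [mul_le_mul_of_nonneg_right (show -X ≤ d by linarith) hs0]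
  have hρd : ρ ≤ d + 2 * sin h := by
    apply abs_le_of_sq_le_sq' _ (by linarith) |>.2
    linarith [mul_le_mul_of_nonneg_right hX2 hs0]
  rcases le_or_gt ψ h with hL | hL
  · refine ⟨_, ?_, (word_LSL h r ψ hr (by linarith) hL).congr rfl ?_ hy.symm rfl rfl rfl rfl⟩
    · linarith
    · linarith
  rcases le_or_gt h ξ with hR | hR
  · refine ⟨_, ?_, (word_RSR h ρ ξ hρ (by linarith) hR).congr rfl ?_ hy'.symm rfl rfl rfl rfl⟩
    · linarith
    · linarith
  have h0' : 0 < h := by linarith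
  have hFL : -2 * sin h ^ 2 ≤ cos h * Y - sin h * X := by
    have := mul_nonneg hr (sin_nonneg_of_nonneg_of_le_pi (x := ψ - h) (by linarith) (by linarith))
    have e : r * sin (ψ - h) = cos h * Y - sin h * (X - 2 * sin h) := by
      rw [sin_sub]; linear_combination -cos h * hy + sin h * hx
    rw [e] at this
    linarith
  have hFR : cos h * Y - sin h * X ≤ 2 * sin h ^ 2 := by
    have := mul_nonneg hρ (sin_nonneg_of_nonneg_of_le_pi (x := h - ξ) (by linarith) (by linarith))
    have e : ρ * sin (h - ξ) = -(cos h * Y - sin h * (X + 2 * sin h)) := by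
      rw [sin_sub]; linear_combination cos h * hy' - sin h * hx'
    rw [e] at this
    linarith
  rcases lt_or_ge (X ^ 2 + (Y + 2 * cos h) ^ 2) 4 with hW | hW
  · exact case_CCC h X Y d h0 hh hY hd hd2 hW
  by_cases hc : 0 ≤ X ∧ 4 ≤ X ^ 2 + (Y - 2 * cos h) ^ 2
  · exact case_LSR h X Y d h0' hh hc.1 hY hd hd2 hFL hc.2
  · refine case_RSL h X Y d h0' hh hY hd hd2 hFR hW fun hX => ?_
    by_contra hcon
    push Not at hcon
    exact hc ⟨hX, hcon.le⟩

theorem main_all (h X Y d : ℝ) (h0 : 0 ≤ h) (hh : h ≤ π / 2) (hd : 0 ≤ d)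
    (hd2 : d ^ 2 = X ^ 2 + Y ^ 2) :
    ∃ T, T ≤ d + 7 * π / 3 ∧ Reach T X Y (-h) h := by
  rcases le_total 0 Y with hY | hY
  · exact main_up h X Y d h0 hh hY hd hd2
  · obtain ⟨T, hT, hr⟩ := main_up h X (-Y) d h0 hh (by linarith) hd (by rw [hd2]; ring)
    refine ⟨T, hT, ?_⟩
    have := hr.refl.rev
    simpa using this

theorem main_mid (d m h : ℝ) (hd : 0 ≤ d) (h0 : 0 ≤ h) (hh : h ≤ π / 2) :
    ∃ T, T ≤ d + 7 * π / 3 ∧ Reach T d 0 (m - h) (m + h) := by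
  have hm := sin_sq_add_cos_sq m
  obtain ⟨T, hT, hr⟩ := main_all h (d * cos m) (-(d * sin m)) d h0 hh hd
    (by linear_combination -d ^ 2 * hm)
  refine ⟨T, hT, (hr.rot m).congr rfl ?_ ?_ ?_ ?_ ?_ ?_⟩
  · linear_combination d * hm
  · ring
  · congr 1; ring
  · congr 1; ring
  · congr 1; ring
  · congr 1; ring

theorem reach_main (d α β : ℝ) (hd : 0 ≤ d) :
    ∃ T, T ≤ d + 7 * π / 3 ∧ Reach T d 0 α β := by
  have hp := pi_pos
  obtain ⟨δ, hδ1, hδ2, n, hn⟩ : ∃ δ : ℝ, -π ≤ δ ∧ δ ≤ π ∧ ∃ n : ℤ, β = α + δ + n * (2 * π) := by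
    have hmem := toIocMod_mem_Ioc two_pi_pos (-π) (β - α)
    refine ⟨toIocMod two_pi_pos (-π) (β - α), hmem.1.le, by linarith [hmem.2],
      toIocDiv two_pi_pos (-π) (β - α), ?_⟩
    have := toIocMod_add_toIocDiv_zsmul two_pi_pos (-π) (β - α)
    rw [zsmul_eq_mul] at this
    linarith
  have hcb : cos (α + δ) = cos β := by rw [hn, cos_add_int_mul_two_pi]
  have hsb : sin (α + δ) = sin β := by rw [hn, sin_add_int_mul_two_pi]
  rcases le_total 0 δ with h | h
  · obtain ⟨T, hT, hr⟩ := main_mid d (α + δ / 2) (δ / 2) hd (by linarith) (by linarith)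
    refine ⟨T, hT, hr.congr rfl rfl rfl ?_ ?_ ?_ ?_⟩
    · congr 1; ring
    · congr 1; ring
    · rw [← hcb]; congr 1; ring
    · rw [← hsb]; congr 1; ring
  · obtain ⟨T, hT, hr⟩ := main_mid d (α + δ / 2) (-δ / 2) hd (by linarith) (by linarith)
    refine ⟨T, hT, hr.rev.congr rfl rfl rfl ?_ ?_ ?_ ?_⟩
    · congr 1; ring
    · congr 1; ring
    · rw [← hcb]; congr 1; ring
    · rw [← hsb]; congr 1; ring

/-- For every `d ≥ 0` and all angles `α, β`, there is a
bounded-curvature path from `(0, 0, α)` to `(d, 0, β)` of length at most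
`d + 7π/3`. -/
theorem bcPath_length_le_seven_pi_third (d : ℝ) (hd : 0 ≤ d) (α β : ℝ) :
    ∃ (T : ℝ) (γ : ℝ → EuclideanSpace ℝ (Fin 2)),
      IsBCPath T 0 0 α d 0 β γ ∧ T ≤ d + 7 * π / 3 := by
  
  obtain ⟨T, hT, hr⟩ := reach_main d α β hd
  obtain ⟨γ, hγ⟩ := hr.path
  exact ⟨T, γ, hγ, hT⟩
end

section
/- For every d ≥ √2 and all real angles α, β, there exists a bounded-curvature path from configuration (0,0,α) to (d,0,β) of length at most d + 5π/2 − √2. -/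
open Real

/-- Existence of a turning-angle function realizing a path of length at most `B`. -/
def BCG (B d α β : ℝ) : Prop :=
  ∃ (T : ℝ) (θ : ℝ → ℝ), 0 ≤ T ∧ T ≤ B ∧ LipschitzWith 1 θ ∧
    cos (θ 0) = cos α ∧ sin (θ 0) = sin α ∧ cos (θ T) = cos β ∧ sin (θ T) = sin β ∧
    (∫ t in (0:ℝ)..T, cos (θ t)) = d ∧ (∫ t in (0:ℝ)..T, sin (θ t)) = 0

lemma unit_chord (a b : ℝ) : (cos a - cos b)^2 + (sin a - sin b)^2 ≤ (a - b)^2 := by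
  have h1 : (cos a - cos b)^2 + (sin a - sin b)^2 = 2 - 2 * cos (a - b) := by
    rw [cos_sub]; nlinarith [sin_sq_add_cos_sq a, sin_sq_add_cos_sq b]
  have h2 := one_sub_sq_div_two_le_cos (x := a - b)
  linarith

lemma BCG.path {B d α β : ℝ} (h : BCG B d α β) :
    ∃ (T : ℝ) (γ : ℝ → EuclideanSpace ℝ (Fin 2)), IsBCPath T 0 0 α d 0 β γ ∧ T ≤ B := by
  obtain ⟨T, θ, hT, hB, hL, hc0, hs0, hcT, hsT, hX, hY⟩ := h
  have hcont : Continuous θ := hL.continuous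
  have hcc : Continuous fun t => cos (θ t) := continuous_cos.comp hcont
  have hss : Continuous fun t => sin (θ t) := continuous_sin.comp hcont
  refine ⟨T, fun t => !₂[∫ x in (0:ℝ)..t, cos (θ x), ∫ x in (0:ℝ)..t, sin (θ x)], ⟨hT,
    fun t => !₂[cos (θ t), sin (θ t)], ?_, ?_, ?_, ?_, ?_, ?_, ?_, ?_⟩, hB⟩
  · intro t _
    apply HasDerivAt.hasDerivWithinAt
    have key : HasDerivAt (fun t => ![∫ x in (0:ℝ)..t, cos (θ x), ∫ x in (0:ℝ)..t, sin (θ x)])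
        (![cos (θ t), sin (θ t)]) t := by
      rw [hasDerivAt_pi]
      intro i
      fin_cases i
      · simpa using intervalIntegral.integral_hasDerivAt_right (hcc.intervalIntegrable 0 t)
          (hcc.stronglyMeasurableAtFilter _ _) hcc.continuousAt
      · simpa using intervalIntegral.integral_hasDerivAt_right (hss.intervalIntegrable 0 t)
          (hss.stronglyMeasurableAtFilter _ _) hss.continuousAt
    exact ((PiLp.continuousLinearEquiv 2 ℝ (fun _ : Fin 2 => ℝ)).symm.toContinuousLinearMap.hasFDerivAt).comp_hasDerivAt t key
  · apply Continuous.continuousOn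
    fun_prop
  · intro t _
    rw [EuclideanSpace.norm_eq]
    simp [Fin.sum_univ_two]
  · apply LipschitzOnWith.of_dist_le_mul
    intro x _ y _
    have h1 := hL.dist_le_mul x y
    rw [EuclideanSpace.dist_eq]
    simp only [NNReal.coe_one, one_mul, Fin.sum_univ_two] at h1 ⊢
    apply Real.sqrt_le_iff.mpr
    refine ⟨dist_nonneg, ?_⟩
    simp only [Real.dist_eq, sq_abs] at h1 ⊢
    simp only [Matrix.cons_val_zero, Matrix.cons_val_one]
    have h2 := unit_chord (θ x) (θ y)
    have h3 : (θ x - θ y)^2 ≤ (x - y)^2 := sq_le_sq.mpr h1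
    linarith
  · simp
  · simp [hc0, hs0]
  · simp [hX, hY]
  · simp [hcT, hsT]

lemma BCG.congr {B d α β α' β' : ℝ} (h : BCG B d α β) (h1 : cos α = cos α') (h2 : sin α = sin α')
    (h3 : cos β = cos β') (h4 : sin β = sin β') : BCG B d α' β' := by
  unfold BCG at *
  rwa [← h1, ← h2, ← h3, ← h4]

lemma BCG.neg {B d α β : ℝ} (h : BCG B d α β) : BCG B d (-α) (-β) := by
  obtain ⟨T, θ, hT, hB, hL, hc0, hs0, hcT, hsT, hX, hY⟩ := h
  refine ⟨T, fun t => - θ t, hT, hB, hL.neg, ?_, ?_, ?_, ?_, ?_, ?_⟩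
  all_goals simp [*]

lemma BCG.swap {B d α β : ℝ} (h : BCG B d α β) : BCG B d β α := by
  obtain ⟨T, θ, hT, hB, hL, hc0, hs0, hcT, hsT, hX, hY⟩ := h
  refine ⟨T, fun t => θ (T - t), hT, hB, ?_, ?_, ?_, ?_, ?_, ?_, ?_⟩
  · apply LipschitzWith.of_dist_le_mul
    intro x y
    have := hL.dist_le_mul (T - x) (T - y)
    have e : dist (T - x) (T - y) = dist x y := by
      rw [Real.dist_eq, Real.dist_eq, abs_sub_comm x y]; congr 1; ring
    rwa [e] at this
  · simp [*]
  · simp [*]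
  · simp [*]
  · simp [*]
  · rw [intervalIntegral.integral_comp_sub_left (fun t => cos (θ t)) T]; simpa using hX
  · rw [intervalIntegral.integral_comp_sub_left (fun t => sin (θ t)) T]; simpa using hY

lemma three_piece (a t₁ t₂ t₃ u₁ u₂ u₃ : ℝ) (h₁ : 0 ≤ t₁) (h₂ : 0 ≤ t₂) (h₃ : 0 ≤ t₃)
    (hu₁ : |u₁| ≤ 1) (hu₂ : |u₂| ≤ 1) (hu₃ : |u₃| ≤ 1) :
    ∃ θ : ℝ → ℝ, LipschitzWith 1 θ ∧ θ 0 = a ∧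
      θ (t₁ + t₂ + t₃) = a + u₁ * t₁ + u₂ * t₂ + u₃ * t₃ ∧
      ∀ f : ℝ → ℝ, Continuous f → (∫ t in (0:ℝ)..(t₁ + t₂ + t₃), f (θ t)) =
        (∫ t in (0:ℝ)..t₁, f (a + u₁ * t)) + (∫ t in (0:ℝ)..t₂, f (a + u₁ * t₁ + u₂ * t)) +
        (∫ t in (0:ℝ)..t₃, f (a + u₁ * t₁ + u₂ * t₂ + u₃ * t)) := by
  let p₁ : ℝ → ℝ := fun t => min t t₁
  let p₂ : ℝ → ℝ := fun t => max 0 (min (t - t₁) t₂)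
  let p₃ : ℝ → ℝ := fun t => max 0 (t - t₁ - t₂)
  have hm₁ : Monotone p₁ := fun x y h => by simp only [p₁]; gcongr
  have hm₂ : Monotone p₂ := fun x y h => by simp only [p₂]; gcongr
  have hm₃ : Monotone p₃ := fun x y h => by simp only [p₃]; gcongr
  have hsum : ∀ t, p₁ t + p₂ t + p₃ t = t := by
    intro t
    simp only [p₁, p₂, p₃]
    grind
  have e₁ : ∀ t, t ≤ t₁ → p₁ t = t ∧ p₂ t = 0 ∧ p₃ t = 0 := by
    intro t ht
    simp only [p₁, p₂, p₃]
    grind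
  have e₂ : ∀ t, 0 ≤ t → t ≤ t₂ → p₁ (t + t₁) = t₁ ∧ p₂ (t + t₁) = t ∧ p₃ (t + t₁) = 0 := by
    intro t ht
    simp only [p₁, p₂, p₃]
    grind
  have e₃ : ∀ t, 0 ≤ t → p₁ (t + (t₁ + t₂)) = t₁ ∧ p₂ (t + (t₁ + t₂)) = t₂ ∧ p₃ (t + (t₁ + t₂)) = t := by
    intro t ht
    simp only [p₁, p₂, p₃]
    grind
  let θ : ℝ → ℝ := fun t => a + u₁ * p₁ t + u₂ * p₂ t + u₃ * p₃ t
  have hL' : ∀ x y, x ≤ y → |θ x - θ y| ≤ y - x := by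
    intro x y h
    have q₁ := hm₁ h
    have q₂ := hm₂ h
    have q₃ := hm₃ h
    have sx := hsum x
    have sy := hsum y
    have hθ : θ x - θ y = u₁ * (p₁ x - p₁ y) + u₂ * (p₂ x - p₂ y) + u₃ * (p₃ x - p₃ y) := by
      simp only [θ]; ring
    have key : ∀ u d : ℝ, |u| ≤ 1 → d ≤ 0 → |u * d| ≤ -d := by
      intro u d hu hd
      rw [abs_mul, abs_of_nonpos hd]
      nlinarith
    rw [hθ]
    have k₁ := key u₁ (p₁ x - p₁ y) hu₁ (by linarith)
    have k₂ := key u₂ (p₂ x - p₂ y) hu₂ (by linarith)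
    have k₃ := key u₃ (p₃ x - p₃ y) hu₃ (by linarith)
    have := abs_add_three (u₁ * (p₁ x - p₁ y)) (u₂ * (p₂ x - p₂ y)) (u₃ * (p₃ x - p₃ y))
    linarith
  have hL : LipschitzWith 1 θ := by
    apply LipschitzWith.of_dist_le_mul
    intro x y
    simp only [NNReal.coe_one, one_mul, Real.dist_eq]
    rcases le_total x y with h | h
    · rw [abs_sub_comm x y]; exact (hL' x y h).trans (le_abs_self _)
    · rw [abs_sub_comm (θ x)]; exact (hL' y x h).trans (le_abs_self _)
  refine ⟨θ, hL, ?_, ?_, ?_⟩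
  · obtain ⟨r1, r2, r3⟩ := e₁ 0 h₁
    simp only [θ, r1, r2, r3]; ring
  · obtain ⟨r1, r2, r3⟩ := e₃ t₃ h₃
    rw [show t₁ + t₂ + t₃ = t₃ + (t₁ + t₂) by ring]
    simp only [θ, r1, r2, r3]
  · intro f hf
    have hc : Continuous fun t => f (θ t) := hf.comp hL.continuous
    have i₁ : (∫ t in (0:ℝ)..t₁, f (θ t)) = ∫ t in (0:ℝ)..t₁, f (a + u₁ * t) := by
      apply intervalIntegral.integral_congr
      intro t ht
      rw [Set.uIcc_of_le h₁] at ht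
      obtain ⟨r1, r2, r3⟩ := e₁ t ht.2
      simp only [θ, r1, r2, r3]; congr 1; ring
    have i₂ : (∫ t in t₁..(t₁ + t₂), f (θ t)) = ∫ t in (0:ℝ)..t₂, f (a + u₁ * t₁ + u₂ * t) := by
      have := intervalIntegral.integral_comp_add_right (a := 0) (b := t₂) (fun t => f (θ t)) t₁
      rw [zero_add, add_comm t₂ t₁] at this
      rw [← this]
      apply intervalIntegral.integral_congr
      intro t ht
      rw [Set.uIcc_of_le h₂] at ht
      obtain ⟨r1, r2, r3⟩ := e₂ t ht.1 ht.2
      simp only [θ, r1, r2, r3]; congr 1; ring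
    have i₃ : (∫ t in (t₁ + t₂)..(t₁ + t₂ + t₃), f (θ t))
        = ∫ t in (0:ℝ)..t₃, f (a + u₁ * t₁ + u₂ * t₂ + u₃ * t) := by
      have := intervalIntegral.integral_comp_add_right (a := 0) (b := t₃) (fun t => f (θ t)) (t₁ + t₂)
      rw [zero_add, add_comm t₃ (t₁ + t₂)] at this
      rw [← this]
      apply intervalIntegral.integral_congr
      intro t ht
      rw [Set.uIcc_of_le h₃] at ht
      obtain ⟨r1, r2, r3⟩ := e₃ t ht.1
      simp only [θ, r1, r2, r3]
    rw [← i₁, ← i₂, ← i₃]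
    rw [intervalIntegral.integral_add_adjacent_intervals (hc.intervalIntegrable _ _)
      (hc.intervalIntegrable _ _), intervalIntegral.integral_add_adjacent_intervals
      (hc.intervalIntegrable _ _) (hc.intervalIntegrable _ _)]

lemma int_cos_l (b t : ℝ) : (∫ x in (0:ℝ)..t, cos (b + 1 * x)) = sin (b + t) - sin b := by
  simp [intervalIntegral.integral_comp_add_left (fun x => cos x) b]
lemma int_sin_l (b t : ℝ) : (∫ x in (0:ℝ)..t, sin (b + 1 * x)) = cos b - cos (b + t) := by
  simp [intervalIntegral.integral_comp_add_left (fun x => sin x) b]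
lemma int_cos_r (b t : ℝ) : (∫ x in (0:ℝ)..t, cos (b + (-1) * x)) = sin b - sin (b - t) := by
  simp [← sub_eq_add_neg, intervalIntegral.integral_comp_sub_left (fun x => cos x) b]
lemma int_sin_r (b t : ℝ) : (∫ x in (0:ℝ)..t, sin (b + (-1) * x)) = cos (b - t) - cos b := by
  simp [← sub_eq_add_neg, intervalIntegral.integral_comp_sub_left (fun x => sin x) b]
lemma int_cos_s (b t : ℝ) : (∫ x in (0:ℝ)..t, cos (b + 0 * x)) = t * cos b := by simp
lemma int_sin_s (b t : ℝ) : (∫ x in (0:ℝ)..t, sin (b + 0 * x)) = t * sin b := by simp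

/-- `b` is the end angle up to a multiple of `2π`. -/
lemma mk_LSL {B d a b p s : ℝ} (h1 : a ≤ p) (h2 : p ≤ b) (hs : 0 ≤ s)
    (hx : s * cos p + sin b - sin a = d) (hy : s * sin p + cos a - cos b = 0)
    (hB : (p - a) + s + (b - p) ≤ B) : BCG B d a b := by
  obtain ⟨θ, hL, h0, hT, hI⟩ := three_piece a (p - a) s (b - p) 1 0 1 (by linarith) hs (by linarith)
    (by simp) (by simp) (by simp)
  have e1 : a + 1 * (p - a) = p := by ring
  have e2 : p + 0 * s = p := by ring
  have e3 : p + 1 * (b - p) = b := by ring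
  rw [e1, e2, e3] at hT
  refine ⟨_, θ, by linarith, hB, hL, by rw [h0], by rw [h0], by rw [hT], by rw [hT], ?_, ?_⟩
  · rw [hI _ continuous_cos, e1, e2, int_cos_l, int_cos_s, int_cos_l]
    rw [show a + (p - a) = p by ring, show p + (b - p) = b by ring]; linarith
  · rw [hI _ continuous_sin, e1, e2, int_sin_l, int_sin_s, int_sin_l]
    rw [show a + (p - a) = p by ring, show p + (b - p) = b by ring]; linarith

lemma mk_RSR {B d a b p s : ℝ} (h1 : p ≤ a) (h2 : b ≤ p) (hs : 0 ≤ s)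
    (hx : s * cos p + sin a - sin b = d) (hy : s * sin p + cos b - cos a = 0)
    (hB : (a - p) + s + (p - b) ≤ B) : BCG B d a b := by
  have := mk_LSL (B := B) (d := d) (a := -a) (b := -b) (p := -p) (s := s) (by linarith) (by linarith) hs
    (by simp; linarith) (by simp; linarith) (by linarith)
  simpa using this.neg

lemma mk_LSR {B d a b p s : ℝ} (h1 : a ≤ p) (h2 : b ≤ p) (hs : 0 ≤ s)
    (hx : s * cos p + 2 * sin p - sin a - sin b = d) (hy : s * sin p - 2 * cos p + cos a + cos b = 0)
    (hB : (p - a) + s + (p - b) ≤ B) : BCG B d a b := by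
  obtain ⟨θ, hL, h0, hT, hI⟩ := three_piece a (p - a) s (p - b) 1 0 (-1) (by linarith) hs (by linarith)
    (by simp) (by simp) (by simp)
  have e1 : a + 1 * (p - a) = p := by ring
  have e2 : p + 0 * s = p := by ring
  have e3 : p + (-1) * (p - b) = b := by ring
  rw [e1, e2, e3] at hT
  refine ⟨_, θ, by linarith, hB, hL, by rw [h0], by rw [h0], by rw [hT], by rw [hT], ?_, ?_⟩
  · rw [hI _ continuous_cos, e1, e2, int_cos_l, int_cos_s, int_cos_r]
    rw [show a + (p - a) = p by ring, show p - (p - b) = b by ring]; linarith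
  · rw [hI _ continuous_sin, e1, e2, int_sin_l, int_sin_s, int_sin_r]
    rw [show a + (p - a) = p by ring, show p - (p - b) = b by ring]; linarith

lemma mk_RSL {B d a b p s : ℝ} (h1 : p ≤ a) (h2 : p ≤ b) (hs : 0 ≤ s)
    (hx : s * cos p - 2 * sin p + sin a + sin b = d) (hy : s * sin p + 2 * cos p - cos a - cos b = 0)
    (hB : (a - p) + s + (b - p) ≤ B) : BCG B d a b := by
  have := mk_LSR (B := B) (d := d) (a := -a) (b := -b) (p := -p) (s := s) (by linarith) (by linarith) hs
    (by simp; linarith) (by simp; linarith) (by linarith)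
  simpa using this.neg

lemma mk_LRL {B d a b p q : ℝ} (h1 : a ≤ p) (h2 : q ≤ p) (h3 : q ≤ b)
    (hx : 2 * sin p - 2 * sin q + sin b - sin a = d) (hy : 2 * cos q - 2 * cos p + cos a - cos b = 0)
    (hB : (p - a) + (p - q) + (b - q) ≤ B) : BCG B d a b := by
  obtain ⟨θ, hL, h0, hT, hI⟩ := three_piece a (p - a) (p - q) (b - q) 1 (-1) 1 (by linarith)
    (by linarith) (by linarith) (by simp) (by simp) (by simp)
  have e1 : a + 1 * (p - a) = p := by ring
  have e2 : p + (-1) * (p - q) = q := by ring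
  have e3 : q + 1 * (b - q) = b := by ring
  rw [e1, e2, e3] at hT
  refine ⟨_, θ, by linarith, hB, hL, by rw [h0], by rw [h0], by rw [hT], by rw [hT], ?_, ?_⟩
  · rw [hI _ continuous_cos, e1, e2, int_cos_l, int_cos_r, int_cos_l]
    rw [show a + (p - a) = p by ring, show p - (p - q) = q by ring, show q + (b - q) = b by ring]
    linarith
  · rw [hI _ continuous_sin, e1, e2, int_sin_l, int_sin_r, int_sin_l]
    rw [show a + (p - a) = p by ring, show p - (p - q) = q by ring, show q + (b - q) = b by ring]
    linarith

lemma mk_RLR {B d a b p q : ℝ} (h1 : p ≤ a) (h2 : p ≤ q) (h3 : b ≤ q)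
    (hx : 2 * sin q - 2 * sin p + sin a - sin b = d) (hy : 2 * cos p - 2 * cos q + cos b - cos a = 0)
    (hB : (a - p) + (q - p) + (q - b) ≤ B) : BCG B d a b := by
  have := mk_LRL (B := B) (d := d) (a := -a) (b := -b) (p := -p) (q := -q) (by linarith) (by linarith)
    (by linarith)
    (by simp; linarith) (by simp; linarith) (by linarith)
  simpa using this.neg


lemma polar_exists (x y : ℝ) : ∃ p, -π < p ∧ p ≤ π ∧ x = √(x^2+y^2) * cos p ∧ y = √(x^2+y^2) * sin p := by
  have hn : ‖(⟨x, y⟩ : ℂ)‖ = √(x^2+y^2) := by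
    rw [Complex.norm_def, Complex.normSq_mk]; congr 1; ring
  refine ⟨Complex.arg ⟨x, y⟩, Complex.neg_pi_lt_arg _, Complex.arg_le_pi _, ?_, ?_⟩
  · rw [← hn, Complex.norm_mul_cos_arg]
  · rw [← hn, Complex.norm_mul_sin_arg]

lemma angle_exists (a x y : ℝ) (h : x^2 + y^2 = 1) :
    ∃ p, a ≤ p ∧ p < a + 2 * π ∧ cos p = x ∧ sin p = y := by
  obtain ⟨p, -, -, hx, hy⟩ := polar_exists x y
  rw [h, Real.sqrt_one, one_mul] at hx hy
  have hm := toIcoMod_mem_Ico Real.two_pi_pos a p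
  have e : toIcoMod Real.two_pi_pos a p = p - (toIcoDiv Real.two_pi_pos a p : ℤ) * (2 * π) := by
    have := toIcoMod_add_toIcoDiv_zsmul Real.two_pi_pos a p
    rw [zsmul_eq_mul] at this
    linarith
  refine ⟨toIcoMod Real.two_pi_pos a p, hm.1, hm.2, ?_, ?_⟩
  · rw [e, Real.cos_sub_int_mul_two_pi, hx]
  · rw [e, Real.sin_sub_int_mul_two_pi, hy]

/-- tangent decomposition -/
lemma tangent_exists (a X Y : ℝ) (h : 4 ≤ X^2 + Y^2) :
    ∃ p s, a ≤ p ∧ p < a + 2 * π ∧ 0 ≤ s ∧ X = s * cos p + 2 * sin p ∧ Y = s * sin p - 2 * cos p := by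
  have hs : √(X^2+Y^2-4)^2 = X^2+Y^2-4 := Real.sq_sqrt (by linarith)
  set s := √(X^2+Y^2-4) with hsd
  have hR : X^2+Y^2 ≠ 0 := by linarith
  obtain ⟨p, h1, h2, hc, hsn⟩ := angle_exists a ((s*X-2*Y)/(X^2+Y^2)) ((s*Y+2*X)/(X^2+Y^2)) (by
    field_simp
    linear_combination (X^2+Y^2) * hs)
  refine ⟨p, s, h1, h2, Real.sqrt_nonneg _, ?_, ?_⟩
  · rw [hc, hsn]; field_simp; linear_combination -X * hs
  · rw [hc, hsn]; field_simp; linear_combination -Y * hs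

lemma two_pi_bound (d : ℝ) : d + 2 * π ≤ d + 5 * π / 2 - √2 := by
  have h1 : √2 < 1.4143 := by
    rw [Real.sqrt_lt' (by norm_num)]; norm_num
  have := Real.pi_gt_d4
  linarith

lemma sum_sin (μ η : ℝ) : sin (μ - η) + sin (μ + η) = 2 * sin μ * cos η := by
  rw [sin_add, sin_sub]; ring
lemma sum_cos (μ η : ℝ) : cos (μ - η) + cos (μ + η) = 2 * cos μ * cos η := by
  rw [cos_add, cos_sub]; ring
lemma dif_sin (μ η : ℝ) : sin (μ + η) - sin (μ - η) = 2 * cos μ * sin η := by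
  rw [sin_add, sin_sub]; ring
lemma dif_cos (μ η : ℝ) : cos (μ - η) - cos (μ + η) = 2 * sin μ * sin η := by
  rw [cos_add, cos_sub]; ring

lemma easy_RSR {d μ η : ℝ} (hd : √2 ≤ d) (hμ0 : 0 ≤ μ) (hμ : μ ≤ π) (hη0 : 0 ≤ η) (hη : η ≤ π/2)
    (hα : 0 ≤ μ - η) (h : 2 * sin η ^ 2 ≤ d * sin (μ - η)) :
    BCG (d + 5 * π / 2 - √2) d (μ - η) (μ + η) := by
  have hd0 : 0 < d := lt_of_lt_of_le (by positivity) hd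
  have hpi := Real.pi_pos
  have hsη : 0 ≤ sin η := sin_nonneg_of_nonneg_of_le_pi hη0 (by linarith)
  have hsμ : 0 ≤ sin μ := sin_nonneg_of_nonneg_of_le_pi hμ0 hμ
  obtain ⟨p, hp1, hp2, hx, hy⟩ := polar_exists (d + 2 * cos μ * sin η) (2 * sin μ * sin η)
  have hr : √((d + 2 * cos μ * sin η)^2 + (2 * sin μ * sin η)^2) ≤ d + 2 * sin η := by
    apply Real.sqrt_le_iff.mpr
    refine ⟨by positivity, ?_⟩
    have : (d + 2 * cos μ * sin η)^2 + (2 * sin μ * sin η)^2 = d^2 + 4 * d * sin η * cos μ + 4 * sin η^2 := by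
      linear_combination 4 * sin η^2 * sin_sq_add_cos_sq μ
    rw [this]
    have : 4 * d * sin η * cos μ ≤ 4 * d * sin η * 1 := by
      gcongr; exact cos_le_one μ
    linarith
  have hr0 := Real.sqrt_nonneg ((d + 2 * cos μ * sin η)^2 + (2 * sin μ * sin η)^2)
  set r := √((d + 2 * cos μ * sin η)^2 + (2 * sin μ * sin η)^2) with hrd
  have hsl : sin η ≤ η := sin_le hη0
  -- find the right direction
  obtain ⟨p', hp'a, hp'b, hx', hy'⟩ : ∃ p', p' ≤ μ - η ∧ μ + η - 2 * π ≤ p' ∧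
      d + 2 * cos μ * sin η = r * cos p' ∧ 2 * sin μ * sin η = r * sin p' := by
    rcases hr0.eq_or_lt with h0 | h0
    · refine ⟨μ - η, le_rfl, by linarith, ?_, ?_⟩
      · rw [hx, ← h0]; simp
      · rw [hy, ← h0]; simp
    · refine ⟨p, ?_, ?_, hx, hy⟩
      · have hp0 : 0 ≤ p := by
          by_contra hneg
          push Not at hneg
          have := sin_neg_of_neg_of_neg_pi_lt hneg hp1
          have : 0 ≤ r * sin p := by rw [← hy]; positivity
          nlinarith
        by_contra hlt
        push Not at hlt
        have hcross : r * sin (p - (μ - η)) = 2 * sin η^2 - d * sin (μ - η) := by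
          rw [sin_sub p]
          have e1 : r * (sin p * cos (μ - η) - cos p * sin (μ - η))
            = (r * sin p) * cos (μ - η) - (r * cos p) * sin (μ - η) := by ring
          rw [e1, ← hx, ← hy]
          have := sin_sub μ (μ - η)
          rw [show μ - (μ - η) = η by ring] at this
          linear_combination (-2 * sin η) * this
        rcases eq_or_lt_of_le (show p - (μ - η) ≤ π by linarith) with he | hl
        · have e1 : p = π := by linarith
          have e2 : μ - η = 0 := by linarith
          rw [e2] at h
          simp only [sin_zero, mul_zero] at h
          have : sin η = 0 := by nlinarith
          rw [this, e1] at hx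
          simp at hx
          linarith
        · have := sin_pos_of_pos_of_lt_pi (show 0 < p - (μ - η) by linarith) hl
          nlinarith
      · have hp0 : 0 ≤ p := by
          by_contra hneg
          push Not at hneg
          have := sin_neg_of_neg_of_neg_pi_lt hneg hp1
          have : 0 ≤ r * sin p := by rw [← hy]; positivity
          nlinarith
        linarith
  have hB := two_pi_bound d
  have e1 := dif_sin μ η
  have e2 := dif_cos μ η
  refine (mk_RSR (B := d + 5 * π / 2 - √2) (d := d) (a := μ - η) (b := μ + η - 2 * π) (p := p') (s := r)
    hp'a hp'b hr0 ?_ ?_ (by linarith)).congr rfl rfl (cos_sub_two_pi _) (sin_sub_two_pi _)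
  · rw [sin_sub_two_pi]; linarith
  · rw [cos_sub_two_pi]; linarith

lemma easy_LSL {d μ η : ℝ} (hd : √2 ≤ d) (hμ0 : 0 ≤ μ) (hμ : μ ≤ π) (hη0 : 0 ≤ η) (hη : η ≤ π/2)
    (h : d * sin (μ - η) < - (2 * sin η ^ 2)) :
    BCG (d + 5 * π / 2 - √2) d (μ - η) (μ + η) := by
  have hd0 : 0 < d := lt_of_lt_of_le (by positivity) hd
  have hpi := Real.pi_pos
  have hsη : 0 ≤ sin η := sin_nonneg_of_nonneg_of_le_pi hη0 (by linarith)
  have hsμ : 0 ≤ sin μ := sin_nonneg_of_nonneg_of_le_pi hμ0 hμ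
  have hα : μ - η < 0 := by
    by_contra hc
    push Not at hc
    have := sin_nonneg_of_nonneg_of_le_pi hc (by linarith)
    have : 0 ≤ d * sin (μ - η) := by positivity
    nlinarith
  obtain ⟨p, hp1, hp2, hx, hy⟩ := polar_exists (d - 2 * cos μ * sin η) (-(2 * sin μ * sin η))
  have hr : √((d - 2 * cos μ * sin η)^2 + (-(2 * sin μ * sin η))^2) ≤ d + 2 * sin η := by
    apply Real.sqrt_le_iff.mpr
    refine ⟨by positivity, ?_⟩
    have : (d - 2 * cos μ * sin η)^2 + (-(2 * sin μ * sin η))^2 = d^2 + 4 * d * sin η * (-cos μ) + 4 * sin η^2 := by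
      linear_combination 4 * sin η^2 * sin_sq_add_cos_sq μ
    rw [this]
    have : 4 * d * sin η * (-cos μ) ≤ 4 * d * sin η * 1 := by
      gcongr; linarith [neg_one_le_cos μ]
    linarith
  have hr0 := Real.sqrt_nonneg ((d - 2 * cos μ * sin η)^2 + (-(2 * sin μ * sin η))^2)
  set r := √((d - 2 * cos μ * sin η)^2 + (-(2 * sin μ * sin η))^2) with hrd
  have hsl : sin η ≤ η := sin_le hη0
  have hcross : ∀ q, d - 2 * cos μ * sin η = r * cos q → -(2 * sin μ * sin η) = r * sin q →
      0 < r * sin (q - (μ - η)) := by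
    intro q hx hy
    have : r * sin (q - (μ - η)) = - (2 * sin η^2) - d * sin (μ - η) := by
      rw [sin_sub q]
      have e1 : r * (sin q * cos (μ - η) - cos q * sin (μ - η))
        = (r * sin q) * cos (μ - η) - (r * cos q) * sin (μ - η) := by ring
      rw [e1, ← hx, ← hy]
      have := sin_sub μ (μ - η)
      rw [show μ - (μ - η) = η by ring] at this
      linear_combination (2 * sin η) * this
    linarith
  have hfin : ∀ q, -π ≤ q → q ≤ 0 → d - 2 * cos μ * sin η = r * cos q → -(2 * sin μ * sin η) = r * sin q →
      BCG (d + 5 * π / 2 - √2) d (μ - η) (μ + η) := by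
    intro q hq1 hq2 hx hy
    have hc := hcross q hx hy
    have hge : μ - η ≤ q := by
      by_contra hlt
      push Not at hlt
      have := sin_nonpos_of_nonpos_of_neg_pi_le (show q - (μ - η) ≤ 0 by linarith) (by linarith)
      nlinarith
    have hB := two_pi_bound d
    have e1 := dif_sin μ η
    have e2 := dif_cos μ η
    exact mk_LSL (p := q) (s := r) hge (by linarith) hr0 (by linarith) (by linarith) (by linarith)
  have hrpos : 0 < r := by
    rcases hr0.eq_or_lt with h0 | h0
    · have := hcross p hx hy
      rw [← h0] at this; simp at this
    · exact h0
  rcases le_or_gt p 0 with hp | hp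
  · exact hfin p hp1.le hp hx hy
  · rcases hp2.eq_or_lt with he | hl
    · refine hfin (-π) le_rfl (by linarith) ?_ ?_
      · rw [hx, he]; simp
      · rw [hy, he]; simp
    · have := sin_pos_of_pos_of_lt_pi hp hl
      have h3 : 0 < r * sin p := by positivity
      have h4 : 0 ≤ 2 * sin μ * sin η := by positivity
      linarith


lemma le_pi_sub_arcsin {w r : ℝ} (h0 : 0 < r) (hr : r ≤ sin w) (hw : w ≤ 2 * π) :
    w ≤ π - arcsin r := by
  have hpi := Real.pi_pos
  have h1 := arcsin_le_pi_div_two r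
  rcases le_or_gt w (π/2) with h | h
  · linarith
  · have hwp : w < π := by
      by_contra hc
      push Not at hc
      have h2 : 0 ≤ sin (w - π) := sin_nonneg_of_nonneg_of_le_pi (by linarith) (by linarith)
      rw [sin_sub_pi] at h2
      linarith
    have : arcsin r ≤ π - w := by
      have h3 := monotone_arcsin (show r ≤ sin (π - w) by rw [sin_pi_sub]; exact hr)
      rwa [arcsin_sin (by linarith) (by linarith)] at h3
    linarith

lemma five_half_bound {d : ℝ} (hd : √2 ≤ d) : 5 * π / 2 ≤ d + 5 * π / 2 - √2 := by linarith

lemma RLR_ineq {t s u S c : ℝ} (ht : t^2 = 2) (ht0 : 0 ≤ t) (hs : 0 ≤ s) (hu : 0 ≤ u)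
    (hsu : s^2 + u^2 = 1) (hSc : S^2 + c^2 = 1) (hS : 0 ≤ S) (hc : 0 ≤ c)
    (hA : 2 + 4 * t * s * c < 4 * S^2) :
    8 + 4 * t * (c - S) ≤ 2 + 4 * t * u * S + 4 * S^2 := by
  have ht1 : 1.4142 ≤ t := by
    by_contra h; push Not at h; nlinarith
  have ht2 : t ≤ 1.4143 := by
    by_contra h; push Not at h; nlinarith
  have hus : 1 ≤ u + s := by
    by_contra h; push Not at h; nlinarith
  rcases le_or_gt c 0.42 with h | h
  · have hS2 : 0.8236 ≤ S^2 := by nlinarith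
    have hS3 : 0.907 ≤ S := by
      by_contra h; push Not at h; nlinarith
    have h1 : 0 ≤ 4 * t * u * S := by positivity
    have h2 : 1.4142 * 0.487 ≤ t * (S - c) := by
      apply mul_le_mul ht1 (by linarith) (by norm_num) ht0
    nlinarith
  · have h0 : 0 ≤ t * s * c := by positivity
    have hS2 : 1/2 < S^2 := by nlinarith
    have hcS : c < S := by
      by_contra h; push Not at h; nlinarith
    have htS : 1 ≤ t * S := by
      by_contra h; push Not at h
      have : 0 ≤ t * S := by positivity
      nlinarith
    have h1 : t * (1 - s) * S ≤ t * u * S := by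
      gcongr; linarith
    have h2 : S^2 - c^2 ≤ 2 * t * c := by nlinarith
    have h3 : (S^2 - c^2) * (S - c) ≤ 2 * t * c * (S - c) := by
      apply mul_le_mul_of_nonneg_right h2; linarith
    have h4 : 0 ≤ 2 * c * (t * S - 1) := by
      have : 0 ≤ t * S - 1 := by linarith
      positivity
    have h5 : S * (4 * t * s * c) ≤ S * (4 * S^2 - 2) := by
      apply mul_le_mul_of_nonneg_left _ hS; linarith
    have h6 : c * (8 + 4 * t * (c - S)) ≤ c * (2 + 4 * (t * (1 - s) * S) + 4 * S^2) := by
      have : c^2 = 1 - S^2 := by linarith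
      nlinarith
    have := le_of_mul_le_mul_left h6 (by linarith)
    linarith

lemma RLR_case {d μ η : ℝ} (hd : √2 ≤ d) (hμ0 : 0 ≤ μ) (hμ : μ ≤ π/2) (hη0 : 0 ≤ η) (hη : η ≤ π/2)
    (hr : d^2 ≤ 4 * d * sin μ * cos η + 4 * sin η^2)
    (hA : 2 + 4 * √2 * sin μ * cos η < 4 * sin η^2) :
    BCG (d + 5 * π / 2 - √2) d (μ - η) (μ + η) := by
  have hd0 : 0 < d := lt_of_lt_of_le (by positivity) hd
  have hpi := Real.pi_pos
  have hsη : 0 ≤ sin η := sin_nonneg_of_nonneg_of_le_pi hη0 (by linarith)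
  have hcη : 0 ≤ cos η := cos_nonneg_of_neg_pi_div_two_le_of_le (by linarith) hη
  have hsμ : 0 ≤ sin μ := sin_nonneg_of_nonneg_of_le_pi hμ0 (by linarith)
  have hcμ : 0 ≤ cos μ := cos_nonneg_of_neg_pi_div_two_le_of_le (by linarith) hμ
  obtain ⟨k, hk1, hk2, hx, hy⟩ := polar_exists (d + 2 * cos μ * sin η) (2 * sin μ * sin η)
  have hρ0 := Real.sqrt_nonneg ((d + 2 * cos μ * sin η)^2 + (2 * sin μ * sin η)^2)
  have hρ2 := Real.sq_sqrt (show 0 ≤ (d + 2 * cos μ * sin η)^2 + (2 * sin μ * sin η)^2 by positivity)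
  set ρ := √((d + 2 * cos μ * sin η)^2 + (2 * sin μ * sin η)^2) with hrd
  have hρ2' : ρ^2 = d^2 + 4 * d * cos μ * sin η + 4 * sin η^2 := by
    rw [hρ2]; linear_combination 4 * sin η^2 * sin_sq_add_cos_sq μ
  have hρ : 0 < ρ := by
    rcases hρ0.eq_or_lt with h | h
    · rw [← h] at hρ2'
      have : 0 < d^2 := by positivity
      have : 0 ≤ 4 * d * cos μ * sin η := by positivity
      have : 0 ≤ sin η^2 := by positivity
      linarith
    · exact h
  have hk0 : 0 ≤ k := by
    by_contra hneg
    push Not at hneg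
    have h1 := sin_neg_of_neg_of_neg_pi_lt hneg hk1
    have h2 : 0 ≤ ρ * sin k := by rw [← hy]; positivity
    nlinarith
  have hkc : 0 < ρ * cos k := by rw [← hx]; positivity
  have hkh : k ≤ π/2 := by
    by_contra hneg
    push Not at hneg
    have h1 := cos_nonpos_of_pi_div_two_le_of_le hneg.le (by linarith)
    nlinarith
  have hcross : ∀ z, ρ * sin (z - k) = d * sin z + 2 * sin η * sin (z - μ) := by
    intro z
    rw [sin_sub z k, sin_sub z μ]
    linear_combination (-sin z) * hx + cos z * hy
  have hkμ : k ≤ μ := by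
    by_contra hneg
    push Not at hneg
    have h1 := sin_neg_of_neg_of_neg_pi_lt (show μ - k < 0 by linarith) (by linarith)
    have h2 := hcross μ
    simp only [sub_self, sin_zero, mul_zero, add_zero] at h2
    have : 0 ≤ d * sin μ := by positivity
    nlinarith
  have hβ : ρ / 4 ≤ sin (μ + η - k) := by
    have h1 := hcross (μ + η)
    rw [add_sub_cancel_left] at h1
    have h2 : ρ^2 ≤ 4 * (ρ * sin (μ + η - k)) := by
      rw [h1, hρ2', sin_add]; nlinarith
    have : ρ * ρ ≤ ρ * (4 * sin (μ + η - k)) := by linarith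
    have := le_of_mul_le_mul_left this hρ
    linarith
  have hρ4 : ρ / 4 ≤ 1 := hβ.trans (sin_le_one _)
  have hqβ := le_pi_sub_arcsin (by positivity) hβ (by linarith)
  have hq1 := arcsin_le_pi_div_two (ρ/4)
  have hsq : sin (π - arcsin (ρ/4)) = ρ/4 := by
    rw [sin_pi_sub, sin_arcsin (by linarith) hρ4]
  have hqb : 3 * π / 8 - η / 2 ≤ arcsin (ρ/4) := by
    apply (le_arcsin_iff_sin_le ⟨by linarith, by linarith⟩ ⟨by linarith, hρ4⟩).mpr
    have hsq : sin (3 * π / 8 - η/2)^2 = (1 + √2/2 * (cos η - sin η)) / 2 := by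
      have h1 := cos_sq (3 * π / 8 - η/2)
      rw [show 2 * (3 * π / 8 - η/2) = 3 * π / 4 - η by ring] at h1
      have h2 := sin_sq_add_cos_sq (3 * π / 8 - η/2)
      have h3 : cos (3 * π / 4 - η) = √2/2 * (sin η - cos η) := by
        rw [show 3 * π / 4 - η = π - (π/4 + η) by ring, cos_pi_sub, cos_add, cos_pi_div_four, sin_pi_div_four]
        ring
      rw [h3] at h1
      linarith
    have h4 := RLR_ineq (t := √2) (s := sin μ) (u := cos μ) (S := sin η) (c := cos η) (by norm_num) (by positivity)
      hsμ hcμ (sin_sq_add_cos_sq μ) (sin_sq_add_cos_sq η) hsη hcη hA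
    have h5 : 2 + 4 * √2 * cos μ * sin η ≤ d^2 + 4 * d * cos μ * sin η := by
      have h6 : √2^2 ≤ d^2 := by gcongr
      have h7 : 4 * √2 * cos μ * sin η ≤ 4 * d * cos μ * sin η := by gcongr
      have h8 : √2^2 = 2 := by norm_num
      linarith
    apply le_of_sq_le_sq _ (by positivity)
    rw [hsq]
    linarith
  set q := π - arcsin (ρ/4) with hq
  have e1 := dif_sin μ η
  have e2 := dif_cos μ η
  have e3 := dif_sin k q
  have e4 := dif_cos k q
  rw [hsq] at e3 e4
  exact mk_RLR (p := k - q) (q := k + q) (by linarith) (by linarith) (by linarith)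
    (by linarith) (by linarith) (by linarith)

lemma LRL_case {d μ η : ℝ} (hd : √2 ≤ d) (hμ0 : π/2 ≤ μ) (hμ : μ ≤ π) (hη0 : 0 ≤ η) (hη : η ≤ π/2)
    (ho : d^2 + 4 * d * sin μ * cos η < 4 * sin η^2) :
    BCG (d + 5 * π / 2 - √2) d (μ - η) (μ + η) := by
  have hd0 : 0 < d := lt_of_lt_of_le (by positivity) hd
  have hpi := Real.pi_pos
  have hsη : 0 ≤ sin η := sin_nonneg_of_nonneg_of_le_pi hη0 (by linarith)
  have hcη : 0 ≤ cos η := cos_nonneg_of_neg_pi_div_two_le_of_le (by linarith) hη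
  have hsμ : 0 ≤ sin μ := sin_nonneg_of_nonneg_of_le_pi (by linarith) (by linarith)
  have hcμ : 0 ≤ -cos μ := by
    have := cos_nonpos_of_pi_div_two_le_of_le hμ0 (by linarith)
    linarith
  obtain ⟨k, hk1, hk2, hx, hy⟩ := polar_exists (d - 2 * cos μ * sin η) (-(2 * sin μ * sin η))
  have hρ0 := Real.sqrt_nonneg ((d - 2 * cos μ * sin η)^2 + (-(2 * sin μ * sin η))^2)
  have hρ2 := Real.sq_sqrt (show 0 ≤ (d - 2 * cos μ * sin η)^2 + (-(2 * sin μ * sin η))^2 by positivity)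
  set ρ := √((d - 2 * cos μ * sin η)^2 + (-(2 * sin μ * sin η))^2) with hrd
  have hρ2' : ρ^2 = d^2 + 4 * d * (-cos μ) * sin η + 4 * sin η^2 := by
    rw [hρ2]; linear_combination 4 * sin η^2 * sin_sq_add_cos_sq μ
  have hd2 : 2 ≤ d^2 := by
    have h6 : √2^2 ≤ d^2 := by gcongr
    have h8 : √2^2 = 2 := by norm_num
    linarith
  have hscp : 0 ≤ 4 * d * sin μ * cos η := by positivity
  have hsm : 0 ≤ 4 * d * (-cos μ) * sin η := by positivity
  have hρge : 2 ≤ ρ := by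
    apply le_of_sq_le_sq _ hρ0
    linarith
  have hρ : 0 < ρ := by linarith
  have hkc : 0 < ρ * cos k := by
    rw [← hx]
    have : 0 ≤ -cos μ * sin η := by positivity
    linarith
  have hk0 : k ≤ 0 := by
    by_contra hneg
    push Not at hneg
    have h2 : ρ * sin k ≤ 0 := by
      rw [← hy]
      have : 0 ≤ 2 * sin μ * sin η := by positivity
      linarith
    rcases hk2.eq_or_lt with h | h
    · rw [h, cos_pi] at hkc; linarith
    · have h1 := sin_pos_of_pos_of_lt_pi hneg h
      nlinarith
  have hkh : -(π/2) ≤ k := by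
    by_contra hneg
    push Not at hneg
    have h1 := cos_nonpos_of_pi_div_two_le_of_le (show π/2 ≤ -k by linarith) (by linarith)
    rw [cos_neg] at h1
    nlinarith
  have hcross : ∀ z, ρ * sin (z - k) = d * sin z - 2 * sin η * sin (z - μ) := by
    intro z
    rw [sin_sub z k, sin_sub z μ]
    linear_combination (-sin z) * hx + cos z * hy
  have hβ : ρ / 4 ≤ sin (2 * π - (μ + η - k)) := by
    rw [sin_two_pi_sub]
    have h1 := hcross (μ + η)
    rw [add_sub_cancel_left] at h1
    have h2 : ρ^2 ≤ -4 * (ρ * sin (μ + η - k)) := by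
      rw [h1, hρ2', sin_add]; nlinarith
    have : ρ * ρ ≤ ρ * (-4 * sin (μ + η - k)) := by linarith
    have := le_of_mul_le_mul_left this hρ
    linarith
  have hα : ρ / 4 ≤ sin (μ - η - k) := by
    have h1 := hcross (μ - η)
    rw [show μ - η - μ = -η by ring, sin_neg] at h1
    have h2 : ρ^2 ≤ 4 * (ρ * sin (μ - η - k)) := by
      rw [h1, hρ2', sin_sub]; nlinarith
    have : ρ * ρ ≤ ρ * (4 * sin (μ - η - k)) := by linarith
    have := le_of_mul_le_mul_left this hρ
    linarith
  have hρ4 : ρ / 4 ≤ 1 := hβ.trans (sin_le_one _)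
  have hqβ := le_pi_sub_arcsin (by positivity) hβ (by linarith)
  have hqα := le_pi_sub_arcsin (by positivity) hα (by linarith)
  have hq1 := arcsin_le_pi_div_two (ρ/4)
  have hsq : sin (π - arcsin (ρ/4)) = ρ/4 := by
    rw [sin_pi_sub, sin_arcsin (by linarith) hρ4]
  have hqb : π/6 ≤ arcsin (ρ/4) := by
    apply (le_arcsin_iff_sin_le ⟨by linarith, by linarith⟩ ⟨by linarith, hρ4⟩).mpr
    rw [sin_pi_div_six]; linarith
  set q := π - arcsin (ρ/4) with hq
  have e1 := dif_sin μ η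
  have e2 := dif_cos μ η
  have e3 := dif_sin k q
  have e4 := dif_cos k q
  rw [hsq] at e3 e4
  refine (mk_LRL (B := d + 5 * π / 2 - √2) (d := d) (a := μ - η) (b := μ + η - 2 * π) (p := k + q) (q := k - q)
    (by linarith) (by linarith) (by linarith) ?_ ?_
    (by linarith)).congr rfl rfl (cos_sub_two_pi _) (sin_sub_two_pi _)
  · rw [sin_sub_two_pi]; linarith
  · rw [cos_sub_two_pi]; linarith


lemma cos_lt_one_abs {x : ℝ} (h0 : 0 < x) (h1 : x < π) : |cos x| < 1 := by
  have h2 := sin_pos_of_pos_of_lt_pi h0 h1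
  have h3 := sin_sq_add_cos_sq x
  rw [abs_lt]
  constructor <;> nlinarith

lemma no_sol {x K L : ℝ} (h0 : 0 < x) (h1 : x < π) (hK : |K| ≤ 2) (hL : L ≤ 0)
    (h : 2 = cos x * K + sin x * L) : False := by
  have h2 := sin_pos_of_pos_of_lt_pi h0 h1
  have h3 := cos_lt_one_abs h0 h1
  have h4 : cos x * K ≤ |cos x| * |K| := by rw [← abs_mul]; exact le_abs_self _
  have h5 : |cos x| * |K| ≤ |cos x| * 2 := by gcongr
  nlinarith

lemma RSL_case {d μ η : ℝ} (hd : √2 ≤ d) (hμ0 : 0 ≤ μ) (hμ : μ ≤ π/2) (hη0 : 0 ≤ η) (hη : η ≤ π/2)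
    (h1 : d * sin (μ - η) < 2 * sin η^2) (h2 : -(2 * sin η^2) ≤ d * sin (μ - η))
    (hR : 4 * sin η^2 ≤ d^2 - 4 * d * sin μ * cos η) (hlt : d * sin μ < 2) :
    BCG (d + 5 * π / 2 - √2) d (μ - η) (μ + η) := by
  have hd0 : 0 < d := lt_of_lt_of_le (by positivity) hd
  have hpi := Real.pi_pos
  have hsη : 0 ≤ sin η := sin_nonneg_of_nonneg_of_le_pi hη0 (by linarith)
  have hcη : 0 ≤ cos η := cos_nonneg_of_neg_pi_div_two_le_of_le (by linarith) hη
  have hsμ : 0 ≤ sin μ := sin_nonneg_of_nonneg_of_le_pi hμ0 (by linarith)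
  have hcα : 0 ≤ cos (μ - η) := cos_nonneg_of_neg_pi_div_two_le_of_le (by linarith) (by linarith)
  have hsc := sin_sq_add_cos_sq η
  obtain ⟨p', s, hp1, hp2, hs, hX, hY⟩ := tangent_exists (-(μ - η)) (d - 2 * sin μ * cos η) (-(2 * cos μ * cos η)) (by
    have : (d - 2 * sin μ * cos η)^2 + (-(2 * cos μ * cos η))^2 = d^2 - 4 * d * sin μ * cos η + 4 * cos η^2 := by
      linear_combination 4 * cos η^2 * sin_sq_add_cos_sq μ
    rw [this]; linarith)
  obtain ⟨p, rfl⟩ : ∃ p, p' = -p := ⟨-p', by ring⟩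
  rw [cos_neg, sin_neg] at hX hY
  have hsp := sin_sq_add_cos_sq p
  have hseq : s = d * cos p - 2 * cos η * sin (μ - p) := by
    rw [sin_sub]
    linear_combination (-s) * hsp - cos p * hX + sin p * hY
  have hF : -2 = d * sin p - 2 * cos η * cos (μ - p) := by
    rw [cos_sub]
    linear_combination 2 * hsp - sin p * hX - cos p * hY
  have e1 := sum_sin μ η
  have e2 := sum_cos μ η
  rcases le_or_gt (μ - p) π with hm | hm
  · have hsm : 0 ≤ sin (μ - p) := sin_nonneg_of_nonneg_of_le_pi (by linarith) hm
    have h3 : d * cos p ≤ d * 1 := by gcongr; exact cos_le_one p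
    have h4 : 0 ≤ 2 * cos η * sin (μ - p) := by positivity
    have hB := two_pi_bound d
    exact mk_RSL (p := p) (s := s) (by linarith) (by linarith) hs (by linarith) (by linarith) (by linarith)
  · exfalso
    have hK : |2 * cos η^2 - d * sin (μ - η)| ≤ 2 := by
      rw [abs_le]; constructor <;> nlinarith
    have hL : 2 * cos η * sin η - d * cos (μ - η) ≤ 0 := by
      rw [sub_nonpos]
      apply le_of_sq_le_sq _ (by positivity)
      have h3 : (d * cos (μ - η))^2 = d^2 - (d * sin (μ - η))^2 := by
        linear_combination d^2 * sin_sq_add_cos_sq (μ - η)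
      have h4 : (d * sin (μ - η))^2 ≤ (2 * sin η^2)^2 := sq_le_sq' h2 h1.le
      have h5 : 0 ≤ 4 * d * sin μ * cos η := by positivity
      have h6 : (2 * cos η * sin η)^2 = 4 * sin η^2 - (2 * sin η^2)^2 := by
        linear_combination 4 * sin η^2 * hsc
      rw [h3, h6]; linarith
    rcases lt_or_ge (p + 2 * π - (μ - η)) π with hx | hx
    · refine no_sol (x := p + 2 * π - (μ - η)) (by linarith) hx hK hL ?_
      have h3 : sin p = sin ((μ - η) + (p + 2 * π - (μ - η))) := by
        rw [show (μ - η) + (p + 2 * π - (μ - η)) = p + 2 * π by ring, sin_add_two_pi]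
      have h4 : cos (μ - p) = cos (η - (p + 2 * π - (μ - η))) := by
        rw [show η - (p + 2 * π - (μ - η)) = μ - p - 2 * π by ring, cos_sub_two_pi]
      rw [h3, h4, sin_add (μ - η), cos_sub η] at hF
      linarith
    · have h3 : sin p = - sin (p + π) := by rw [sin_add_pi]; ring
      have h4 : cos (μ - p) = - cos (μ - (p + π)) := by
        rw [show μ - (p + π) = μ - p - π by ring, cos_sub_pi]; ring
      rw [h3, h4] at hF
      have h5 : 0 ≤ cos (μ - (p + π)) := cos_nonneg_of_neg_pi_div_two_le_of_le (by linarith) (by linarith)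
      have h6 : sin (p + π) ≤ sin μ := sin_le_sin_of_le_of_le_pi_div_two (by linarith) hμ (by linarith)
      have h7 : d * sin (p + π) ≤ d * sin μ := by gcongr
      have h8 : 0 ≤ 2 * cos η * cos (μ - (p + π)) := by positivity
      linarith

lemma M3_ineq {d μ η h s : ℝ} (hd : √2 ≤ d) (hμ0 : 0 ≤ μ) (hμ : μ ≤ π/2) (hη0 : 0 ≤ η) (hη : η ≤ π/2)
    (hμh : μ < h) (hhβ : h ≤ μ + η) (hs : 0 ≤ s)
    (hseq : s = d * cos h - 2 * cos η * sin (h - μ)) (hF : 2 = d * sin h + 2 * cos η * cos (h - μ))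
    (hA : 4 * sin η^2 ≤ 2 + 4 * √2 * sin μ * cos η) :
    2 * (h - μ) + s ≤ d + π/2 - √2 := by
  have h20 : 0 < √2 := by positivity
  have h22 : √2^2 = 2 := by norm_num
  have hd0 : 0 < d := lt_of_lt_of_le (by positivity) hd
  have hpi := Real.pi_pos
  have hcη : 0 ≤ cos η := cos_nonneg_of_neg_pi_div_two_le_of_le (by linarith) hη
  have hsμ : 0 ≤ sin μ := sin_nonneg_of_nonneg_of_le_pi hμ0 (by linarith)
  have hcμ : 0 ≤ cos μ := cos_nonneg_of_neg_pi_div_two_le_of_le (by linarith) hμ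
  have hsm : 0 ≤ sin (h - μ) := sin_nonneg_of_nonneg_of_le_pi (by linarith) (by linarith)
  have hcm : 0 ≤ cos (h - μ) := cos_nonneg_of_neg_pi_div_two_le_of_le (by linarith) (by linarith)
  have hsh : 0 ≤ sin h := sin_nonneg_of_nonneg_of_le_pi (by linarith) (by linarith)
  have hsc := sin_sq_add_cos_sq η
  have hch := cos_le_one h
  have hst : 0 ≤ √2 * cos h - 2 * cos η * sin (h - μ) := by
    by_contra hneg
    push Not at hneg
    have hcp : 0 < cos h := by
      by_contra hc
      push Not at hc
      nlinarith
    set d' := 2 * cos η * sin (h - μ) / cos h with hd'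
    have hd'e : d' * cos h = 2 * cos η * sin (h - μ) := by rw [hd']; field_simp
    have h1 : √2 < d' := by
      rw [hd', lt_div_iff₀ hcp]; linarith
    have h2 : d' ≤ d := by
      rw [hd', div_le_iff₀ hcp]; linarith
    have hid : d'^2 + 4 * d' * sin μ * cos η + 4 * cos η^2
        = (d' * cos h - 2 * cos η * sin (h - μ))^2 + (d' * sin h + 2 * cos η * cos (h - μ))^2 := by
      have h3 := sin_sub h (h - μ)
      rw [show h - (h - μ) = μ by ring] at h3
      rw [h3]
      linear_combination (-d'^2) * sin_sq_add_cos_sq h - 4 * cos η^2 * sin_sq_add_cos_sq (h - μ)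
    rw [hd'e, sub_self] at hid
    have h3 : d' * sin h + 2 * cos η * cos (h - μ) ≤ 2 := by
      have : d' * sin h ≤ d * sin h := by gcongr
      linarith
    have h0' : 0 < d' := by linarith
    have h4 : 0 ≤ d' * sin h + 2 * cos η * cos (h - μ) := by positivity
    have h5 : (d' * sin h + 2 * cos η * cos (h - μ))^2 ≤ 2^2 := by gcongr
    have h6 : √2^2 < d'^2 := by gcongr
    have h7 : 4 * √2 * sin μ * cos η ≤ 4 * d' * sin μ * cos η := by gcongr
    nlinarith
  have hsd : s - d ≤ (√2 * cos h - 2 * cos η * sin (h - μ)) - √2 := by nlinarith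
  have hse : √2 * cos h - 2 * cos η * sin (h - μ) = √2 * cos μ * cos (h - μ) - (√2 * sin μ + 2 * cos η) * sin (h - μ) := by
    have h3 := cos_add μ (h - μ)
    rw [show μ + (h - μ) = h by ring] at h3
    rw [h3]; ring
  rw [hse] at hsd hst
  have hc1 := cos_le_one μ
  have hA2 : √2 * cos μ / 2 ≤ √2 / 2 := by nlinarith
  have hA0 : 0 ≤ √2 * cos μ / 2 := by positivity
  have h2lt : √2 / 2 ≤ 1 := by nlinarith
  have hst1 := sin_arcsin (show -1 ≤ √2 * cos μ / 2 by linarith) (by linarith)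
  have ht4 : arcsin (√2 * cos μ / 2) ≤ π/4 := by
    apply (arcsin_le_iff_le_sin' ⟨by linarith, by linarith⟩).mpr
    rw [sin_pi_div_four]; exact hA2
  have ht0 : 0 ≤ arcsin (√2 * cos μ / 2) := arcsin_nonneg.mpr hA0
  set t := arcsin (√2 * cos μ / 2) with ht
  have hBq : 2 * cos t ≤ √2 * sin μ + 2 * cos η := by
    apply le_of_sq_le_sq _ (by positivity)
    have h3 := sin_sq_add_cos_sq t
    rw [hst1] at h3
    have h4 := sin_sq_add_cos_sq μ
    nlinarith
  have hle : √2 * cos μ * cos (h - μ) - (√2 * sin μ + 2 * cos η) * sin (h - μ) ≤ 2 * sin (t - (h - μ)) := by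
    rw [sin_sub t, hst1]
    have := mul_le_mul_of_nonneg_right hBq hsm
    linarith
  have hmt : h - μ ≤ t := by
    by_contra hneg
    push Not at hneg
    have := sin_neg_of_neg_of_neg_pi_lt (show t - (h - μ) < 0 by linarith) (by linarith)
    linarith
  have := sin_le (show 0 ≤ t - (h - μ) by linarith)
  linarith

lemma LSR_case {d μ η : ℝ} (hd : √2 ≤ d) (hμ0 : 0 ≤ μ) (hμ : μ ≤ π) (hη0 : 0 ≤ η) (hη : η ≤ π/2)
    (h1 : d * sin (μ - η) < 2 * sin η^2) (h2 : -(2 * sin η^2) ≤ d * sin (μ - η))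
    (hL : 4 * sin η^2 ≤ d^2 + 4 * d * sin μ * cos η) :
    BCG (d + 5 * π / 2 - √2) d (μ - η) (μ + η) := by
  have hd0 : 0 < d := lt_of_lt_of_le (by positivity) hd
  have hpi := Real.pi_pos
  have hsη : 0 ≤ sin η := sin_nonneg_of_nonneg_of_le_pi hη0 (by linarith)
  have hcη : 0 ≤ cos η := cos_nonneg_of_neg_pi_div_two_le_of_le (by linarith) hη
  have hsμ : 0 ≤ sin μ := sin_nonneg_of_nonneg_of_le_pi hμ0 (by linarith)
  have hsc := sin_sq_add_cos_sq η
  have hB := two_pi_bound d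
  obtain ⟨h, s, hp1, hp2, hs, hX, hY⟩ := tangent_exists (μ - η) (d + 2 * sin μ * cos η) (-(2 * cos μ * cos η)) (by
    have : (d + 2 * sin μ * cos η)^2 + (-(2 * cos μ * cos η))^2 = d^2 + 4 * d * sin μ * cos η + 4 * cos η^2 := by
      linear_combination 4 * cos η^2 * sin_sq_add_cos_sq μ
    rw [this]; linarith)
  have hsp := sin_sq_add_cos_sq h
  have hseq : s = d * cos h - 2 * cos η * sin (h - μ) := by
    rw [sin_sub]
    linear_combination (-s) * hsp - cos h * hX - sin h * hY
  have hF : 2 = d * sin h + 2 * cos η * cos (h - μ) := by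
    rw [cos_sub]
    linear_combination (-2) * hsp - sin h * hX + cos h * hY
  have e1 := sum_sin μ η
  have e2 := sum_cos μ η
  have hdc : d * cos h ≤ d * 1 := by gcongr; exact cos_le_one h
  have hloop : (h - (μ - η)) + s + (h - (μ + η - 2 * π)) ≤ d + 5 * π / 2 - √2 →
      BCG (d + 5 * π / 2 - √2) d (μ - η) (μ + η) := by
    intro hlen
    refine (mk_LSR (B := d + 5 * π / 2 - √2) (d := d) (a := μ - η) (b := μ + η - 2 * π) (p := h) (s := s)
      hp1 (by linarith) hs ?_ ?_ hlen).congr rfl rfl (cos_sub_two_pi _) (sin_sub_two_pi _)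
    · rw [sin_sub_two_pi]; linarith
    · rw [cos_sub_two_pi]; linarith
  rcases le_or_gt h μ with ha | ha
  · apply hloop
    have h3 : h - μ ≤ sin (h - μ) := by
      have := sin_le (show 0 ≤ μ - h by linarith)
      rw [← neg_sub h μ, sin_neg] at this
      linarith
    have h4 : cos η * (h - μ) ≤ cos η * sin (h - μ) := by gcongr
    have h5 : 0 ≤ (1 - cos η) * (μ - h) :=
      mul_nonneg (by linarith [cos_le_one η]) (by linarith)
    linarith
  rcases le_or_gt h (μ + η) with hb | hb
  · -- middle case
    have hsm : 0 < sin (h - μ) := sin_pos_of_pos_of_lt_pi (by linarith) (by linarith)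
    have hcm : 0 ≤ cos (h - μ) := cos_nonneg_of_neg_pi_div_two_le_of_le (by linarith) (by linarith)
    have hcm1 := (abs_lt.mp (cos_lt_one_abs (show 0 < h - μ by linarith) (by linarith))).2
    have hcμ : d * cos μ = s * cos (h - μ) + 2 * sin (h - μ) := by
      rw [sin_sub, cos_sub]; linear_combination cos μ * hX + sin μ * hY
    have hsμe : d * sin μ + 2 * cos η = 2 * cos (h - μ) - s * sin (h - μ) := by
      rw [sin_sub, cos_sub]
      linear_combination sin μ * hX - cos μ * hY - 2 * cos η * sin_sq_add_cos_sq μ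
    have hcμ0 : 0 < d * cos μ := by
      have : 0 ≤ s * cos (h - μ) := by positivity
      linarith
    have hμ2 : μ ≤ π/2 := by
      by_contra hc
      push Not at hc
      have := cos_nonpos_of_pi_div_two_le_of_le hc.le (by linarith)
      nlinarith
    rcases le_or_gt (4 * sin η^2) (2 + 4 * √2 * sin μ * cos η) with hA | hA
    · apply hloop
      have := M3_ineq hd hμ0 hμ2 hη0 hη ha hb hs hseq hF hA
      linarith
    · rcases le_or_gt (4 * sin η^2) (d^2 - 4 * d * sin μ * cos η) with hR | hR
      · refine RSL_case hd hμ0 hμ2 hη0 hη h1 h2 hR ?_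
        have : 0 ≤ s * sin (h - μ) := by positivity
        linarith
      · exact RLR_case hd hμ0 hμ2 hη0 hη (by linarith) hA
  rcases le_or_gt h (μ + π) with hc | hc
  · have hsm : 0 ≤ sin (h - μ) := sin_nonneg_of_nonneg_of_le_pi (by linarith) (by linarith)
    have h4 : 0 ≤ 2 * cos η * sin (h - μ) := by positivity
    exact mk_LSR (p := h) (s := s) hp1 hb.le hs (by linarith) (by linarith) (by linarith)
  · exfalso
    have hK : |2 * cos η^2 + d * sin (μ - η)| ≤ 2 := by
      rw [abs_le]; constructor <;> nlinarith
    have hL : -(d * cos (μ - η) + 2 * cos η * sin η) ≤ 0 := by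
      rcases le_or_gt 0 (cos (μ - η)) with hca | hca
      · have : 0 ≤ d * cos (μ - η) + 2 * cos η * sin η := by positivity
        linarith
      · have hα : π/2 < μ - η := by
          by_contra hn
          push Not at hn
          have := cos_nonneg_of_neg_pi_div_two_le_of_le (show -(π/2) ≤ μ - η by linarith) hn
          linarith
        have h3 : sin η ≤ sin (π - (μ - η)) := sin_le_sin_of_le_of_le_pi_div_two (by linarith) (by linarith) (by linarith)
        have h4 : cos (π - (μ - η)) ≤ cos η := cos_le_cos_of_nonneg_of_le_pi hη0 (by linarith) (by linarith)
        rw [sin_pi_sub] at h3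
        rw [cos_pi_sub] at h4
        have h5 : d < 2 * sin η := by
          by_contra hn
          push Not at hn
          have : (2 * sin η) * sin η ≤ d * sin (μ - η) := by gcongr
          nlinarith
        have h6 : d * (-cos (μ - η)) ≤ (2 * sin η) * cos η := by
          apply mul_le_mul h5.le h4 (by linarith) (by positivity)
        linarith
    refine no_sol (x := (μ - η) - h + 2 * π) (by linarith) (by linarith) hK hL ?_
    have h3 : sin h = sin ((μ - η) - ((μ - η) - h + 2 * π)) := by
      rw [show (μ - η) - ((μ - η) - h + 2 * π) = h - 2 * π by ring, sin_sub_two_pi]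
    have h4 : cos (h - μ) = cos (η + ((μ - η) - h + 2 * π)) := by
      rw [show η + ((μ - η) - h + 2 * π) = -(h - μ) + 2 * π by ring, cos_add_two_pi, cos_neg]
    rw [h3, h4, sin_sub (μ - η), cos_add η] at hF
    linarith

lemma core {d μ η : ℝ} (hd : √2 ≤ d) (hμ0 : 0 ≤ μ) (hμ : μ ≤ π) (hη0 : 0 ≤ η) (hη : η ≤ π/2) :
    BCG (d + 5 * π / 2 - √2) d (μ - η) (μ + η) := by
  have h20 : 0 < √2 := by positivity
  have h22 : √2^2 = 2 := by norm_num
  have hd0 : 0 < d := lt_of_lt_of_le (by positivity) hd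
  have hpi := Real.pi_pos
  have hcη : 0 ≤ cos η := cos_nonneg_of_neg_pi_div_two_le_of_le (by linarith) hη
  have hsμ : 0 ≤ sin μ := sin_nonneg_of_nonneg_of_le_pi hμ0 (by linarith)
  by_cases h2 : d * sin (μ - η) < -(2 * sin η^2)
  · exact easy_LSL hd hμ0 hμ hη0 hη h2
  push Not at h2
  by_cases h1 : 0 ≤ μ - η ∧ 2 * sin η^2 ≤ d * sin (μ - η)
  · exact easy_RSR hd hμ0 hμ hη0 hη h1.1 h1.2
  have h1' : d * sin (μ - η) < 2 * sin η^2 := by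
    by_cases h0 : 0 ≤ μ - η
    · by_contra hc
      push Not at hc
      exact h1 ⟨h0, hc⟩
    · push Not at h0
      have := sin_neg_of_neg_of_neg_pi_lt h0 (by linarith)
      have h3 : d * sin (μ - η) < 0 := mul_neg_of_pos_of_neg hd0 this
      have : 0 ≤ sin η^2 := by positivity
      linarith
  rcases le_or_gt (4 * sin η^2) (d^2 + 4 * d * sin μ * cos η) with hL | hL
  · exact LSR_case hd hμ0 hμ hη0 hη h1' h2 hL
  · rcases le_or_gt μ (π/2) with hm | hm
    · have h3 : 0 ≤ 4 * d * sin μ * cos η := by positivity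
      have h6 : √2^2 ≤ d^2 := by gcongr
      have h7 : 4 * √2 * sin μ * cos η ≤ 4 * d * sin μ * cos η := by gcongr
      exact RLR_case hd hμ0 hm hη0 hη (by linarith) (by linarith)
    · exact LRL_case hd hm.le hμ hη0 hη hL

lemma core2 {d μ η : ℝ} (hd : √2 ≤ d) (hμ0 : -π ≤ μ) (hμ : μ ≤ π) (hη0 : -(π/2) ≤ η) (hη : η ≤ π/2) :
    BCG (d + 5 * π / 2 - √2) d (μ - η) (μ + η) := by
  have key : ∀ ν, 0 ≤ ν → ν ≤ π → BCG (d + 5 * π / 2 - √2) d (ν - η) (ν + η) := by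
    intro ν h0 h1
    rcases le_total 0 η with h | h
    · exact core hd h0 h1 h hη
    · have := (core (η := -η) hd h0 h1 (by linarith) (by linarith)).swap
      rwa [sub_neg_eq_add, ← sub_eq_add_neg] at this
  rcases le_total 0 μ with h | h
  · exact key μ h hμ
  · have := (key (-μ) (by linarith) (by linarith)).neg.swap
    rwa [show -(-μ + η) = μ - η by ring, show -(-μ - η) = μ + η by ring] at this

lemma red_mod (x P : ℝ) (hP : 0 < P) : ∃ n : ℤ, -(P/2) ≤ x - n * P ∧ x - n * P ≤ P/2 := by
  refine ⟨round (x / P), ?_⟩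
  have h := abs_sub_round (x / P)
  rw [abs_le] at h
  have e : x = x / P * P := by field_simp
  constructor <;> nlinarith

lemma full {d : ℝ} (hd : √2 ≤ d) (α β : ℝ) : BCG (d + 5 * π / 2 - √2) d α β := by
  have hpi := Real.pi_pos
  obtain ⟨n, hn1, hn2⟩ := red_mod ((β - α)/2) π hpi
  obtain ⟨k, hk1, hk2⟩ := red_mod ((α + β)/2 - n * π) (2 * π) (by positivity)
  have := core2 hd (μ := (α + β)/2 - n * π - k * (2 * π)) (η := (β - α)/2 - n * π)
    (by linarith) (by linarith) (by linarith) (by linarith)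
  rw [show (α + β)/2 - n * π - k * (2 * π) - ((β - α)/2 - n * π) = α - k * (2 * π) by ring,
    show (α + β)/2 - n * π - k * (2 * π) + ((β - α)/2 - n * π) = β - ((n + k : ℤ) : ℝ) * (2 * π) by push_cast; ring] at this
  exact this.congr (cos_sub_int_mul_two_pi _ _) (sin_sub_int_mul_two_pi _ _)
    (cos_sub_int_mul_two_pi _ _) (sin_sub_int_mul_two_pi _ _)

/-- For every `d ≥ √2` and all angles `α, β`, there is a
bounded-curvature path from `(0, 0, α)` to `(d, 0, β)` of length at most
`d + 5π/2 - √2`. -/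
theorem bcPath_length_le_beyond_sqrt_two (d : ℝ) (hd : Real.sqrt 2 ≤ d) (α β : ℝ) :
    ∃ (T : ℝ) (γ : ℝ → EuclideanSpace ℝ (Fin 2)),
      IsBCPath T 0 0 α d 0 β γ ∧ T ≤ d + 5 * π / 2 - Real.sqrt 2 := by
  exact (full hd α β).path
end
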